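/- Let F be a finite field with q elements whose characteristic is neither 2 nor 3, and let a₁,a₂,a₃, b₁,b₂,b₃, c₁,c₂,c₃ ∈ Fˣ be such that the a_i are pairwise distinct, the b_i are pairwise distinct, the c_i are pairwise distinct, (a₁a₂a₃)(b₁b₂b₃)(c₁c₂c₃) = 1, and a_i b_j c_k ≠ 1 for all i, j, k ∈ {1,2,3}. Let C₁, C₂, C₃ be the conjugacy classes of diag(a₁,a₂,a₃), diag(b₁,b₂,b₃), diag(c₁,c₂,c₃) in GL₃(F) and C₄ the regular unipotent conjugacy class. Then the number of quadruples (S₁, S₂, S₃, S₄) ∈ C₁ × C₂ × C₃ × C₄ with S₁S₂S₃S₄ = 1 equals (|GL₃(F)|/(q−1)) · q⁴(q⁴ + 6q³ + 19q² + 42q + 46). -/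

import Mathlib

namespace GL3Q

open scoped Classical in
/-- Number of elements satisfying `P`, as an integer. -/
noncomputable def cnt {α : Type*} [Fintype α] (P : α → Prop) : ℤ :=
  ∑ x, if P x then 1 else 0

section cnt
variable {α β : Type*} [Fintype α] [Fintype β]

open scoped Classical in
theorem cnt_eq_card (P : α → Prop) : cnt P = ((Finset.univ.filter P).card : ℤ) := by
  simp [cnt]

theorem cnt_eq_natcard (P : α → Prop) : cnt P = (Nat.card {x // P x} : ℤ) := by
  classical
  rw [cnt_eq_card, Nat.card_eq_fintype_card, Fintype.card_subtype]

theorem cnt_congr {P Q : α → Prop} (h : ∀ x, P x ↔ Q x) : cnt P = cnt Q := by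
  congr 1; funext x; exact propext (h x)

theorem cnt_bij {P : α → Prop} {Q : β → Prop} (i : α → β) (j : β → α)
    (hi : ∀ x, P x → Q (i x)) (hj : ∀ y, Q y → P (j y))
    (hij : ∀ x, P x → j (i x) = x) (hji : ∀ y, Q y → i (j y) = y) : cnt P = cnt Q := by
  classical
  rw [cnt_eq_card, cnt_eq_card]
  congr 1
  refine Finset.card_nbij' i j ?_ ?_ ?_ ?_ <;> intro x hx <;> simp at hx ⊢
  · exact hi x hx
  · exact hj x hx
  · exact hij x hx
  · exact hji x hx

theorem cnt_equiv (e : α ≃ β) (Q : β → Prop) : cnt (fun x => Q (e x)) = cnt Q :=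
  cnt_bij e e.symm (fun _ h => h) (fun y h => by simpa using h) (fun _ _ => by simp)
    (fun _ _ => by simp)

theorem cnt_false {P : α → Prop} (h : ∀ x, ¬ P x) : cnt P = 0 := by
  simp [cnt, h]

theorem cnt_true : cnt (fun _ : α => True) = (Fintype.card α : ℤ) := by
  simp [cnt]

theorem cnt_split (P Q : α → Prop) :
    cnt P = cnt (fun x => P x ∧ Q x) + cnt (fun x => P x ∧ ¬ Q x) := by
  classical
  unfold cnt
  rw [← Finset.sum_add_distrib]
  refine Finset.sum_congr rfl fun x _ => ?_
  by_cases h1 : P x <;> by_cases h2 : Q x <;> simp [h1, h2]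

theorem cnt_not (P : α → Prop) : cnt (fun x => ¬ P x) = (Fintype.card α : ℤ) - cnt P := by
  have := cnt_split (fun _ : α => True) P
  simp only [true_and] at this
  rw [← cnt_true, this]; ring

theorem cnt_eq (a : α) : cnt (fun x => x = a) = 1 := by
  classical
  simp [cnt]

theorem cnt_one {P : α → Prop} (a : α) (h : ∀ x, P x ↔ x = a) : cnt P = 1 := by
  rw [cnt_congr h, cnt_eq]

theorem cnt_ne (a : α) : cnt (fun x => x ≠ a) = (Fintype.card α : ℤ) - 1 := by
  rw [← cnt_eq a, ← cnt_not]

theorem cnt_or {P Q R : α → Prop} (h : ∀ x, P x ↔ (Q x ∨ R x)) (h' : ∀ x, Q x → ¬ R x) :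
    cnt P = cnt Q + cnt R := by
  rw [cnt_split P Q]
  congr 1
  · exact cnt_congr fun x => by rw [h]; tauto
  · refine cnt_congr fun x => ?_
    have := h' x
    rw [h]; tauto

theorem cnt_two {P : α → Prop} (a b : α) (hab : a ≠ b) (h : ∀ x, P x ↔ (x = a ∨ x = b)) :
    cnt P = 2 := by
  rw [cnt_or h (by rintro x rfl; exact hab), cnt_eq, cnt_eq]; norm_num

theorem cnt_three {P : α → Prop} (a b c : α) (hab : a ≠ b) (hac : a ≠ c) (hbc : b ≠ c)
    (h : ∀ x, P x ↔ (x = a ∨ x = b ∨ x = c)) :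
    cnt P = 3 := by
  rw [cnt_or h (by rintro x rfl; tauto), cnt_eq, cnt_two b c hbc (fun _ => Iff.rfl)]; norm_num

theorem cnt_prod (P : α → Prop) (Q : β → Prop) :
    cnt (fun x : α × β => P x.1 ∧ Q x.2) = cnt P * cnt Q := by
  classical
  unfold cnt
  rw [Fintype.sum_prod_type, Finset.sum_mul_sum]
  refine Finset.sum_congr rfl fun x _ => Finset.sum_congr rfl fun y _ => ?_
  by_cases h1 : P x <;> by_cases h2 : Q y <;> simp [h1, h2]

theorem cnt_sum_fst (P : α × β → Prop) : cnt P = ∑ x, cnt (fun y => P (x, y)) := by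
  unfold cnt
  rw [Fintype.sum_prod_type]

theorem cnt_sum_snd (P : α × β → Prop) : cnt P = ∑ y, cnt (fun x => P (x, y)) := by
  unfold cnt
  rw [Fintype.sum_prod_type_right]

theorem cnt_prop_and (p : Prop) [Decidable p] (Q : α → Prop) :
    cnt (fun x => p ∧ Q x) = if p then cnt Q else 0 := by
  by_cases h : p
  · rw [if_pos h]; exact cnt_congr (by simp [h])
  · rw [if_neg h]; exact cnt_false (by simp [h])

/-- fibre counting with constant fibre size -/
theorem cnt_fib (P : α × β → Prop) (Q : α → Prop) (c : ℤ)
    (h1 : ∀ x y, P (x, y) → Q x) (h2 : ∀ x, Q x → cnt (fun y => P (x, y)) = c) :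
    cnt P = c * cnt Q := by
  classical
  rw [cnt_sum_fst]
  conv_rhs => unfold cnt
  rw [Finset.mul_sum]
  refine Finset.sum_congr rfl fun x _ => ?_
  by_cases hq : Q x
  · simp [hq, h2 x hq]
  · simp only [hq, if_false, mul_zero]
    exact cnt_false fun y hy => hq (h1 x y hy)

/-- counting through a map with constant fibre size -/
theorem cnt_map (P : α → Prop) (f : α → β) (Q : β → Prop) (c : ℤ)
    (h1 : ∀ x, P x → Q (f x)) (h2 : ∀ y, Q y → cnt (fun x => P x ∧ f x = y) = c) :
    cnt P = c * cnt Q := by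
  rw [← cnt_fib (fun z : β × α => P z.2 ∧ f z.2 = z.1) Q c ?_ ?_]
  · exact cnt_bij (fun x => (f x, x)) (fun z => z.2) (fun x hx => ⟨hx, rfl⟩) (fun y hy => hy.1)
      (fun _ _ => rfl) (fun y hy => Prod.ext hy.2 rfl)
  · rintro y x ⟨hx, hy⟩
    have h3 := h1 x hx
    rw [show f x = y from hy] at h3
    exact h3
  · intro y hy; exact h2 y hy

/-- sum of a function over a condition, constant there -/
theorem sum_cond (P : α → Prop) (f : α → ℤ) (c : ℤ) (h : ∀ x, P x → f x = c)
    (h0 : ∀ x, ¬ P x → f x = 0) : ∑ x, f x = c * cnt P := by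
  classical
  unfold cnt
  rw [Finset.mul_sum]
  refine Finset.sum_congr rfl fun x _ => ?_
  by_cases hq : P x
  · simp [hq, h x hq]
  · simp [hq, h0 x hq]

end cnt

end GL3Q

namespace GL3Q
open Matrix

variable {F : Type*} [Field F]

abbrev M (F : Type*) := Matrix (Fin 3) (Fin 3) F

def tr3 (S : M F) : F := S 0 0 + S 1 1 + S 2 2
def c23 (S : M F) : F := S 0 0 * S 1 1 - S 0 1 * S 1 0 + S 0 0 * S 2 2 - S 0 2 * S 2 0
  + S 1 1 * S 2 2 - S 1 2 * S 2 1

/-- characteristic polynomial coefficients -/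
def Pc (g1 g2 g3 : F) (S : M F) : Prop := tr3 S = g1 ∧ c23 S = g2 ∧ S.det = g3

/-- characteristic polynomial with the three given roots -/
def CR (r : Fin 3 → F) (S : M F) : Prop :=
  Pc (r 0 + r 1 + r 2) (r 0 * r 1 + r 0 * r 2 + r 1 * r 2) (r 0 * r 1 * r 2) S

/-- regular unipotent -/
def RU (T : M F) : Prop := Pc 3 3 1 T ∧ (T - 1) * (T - 1) ≠ 0

open Polynomial in
theorem charpoly3 (S : M F) :
    S.charpoly = X ^ 3 - C (tr3 S) * X ^ 2 + C (c23 S) * X - C S.det := by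
  rw [Matrix.charpoly, Matrix.det_fin_three, Matrix.det_fin_three]
  simp [tr3, c23]
  ring

open Polynomial in
theorem c23_coeff (S : M F) : c23 S = S.charpoly.coeff 1 := by
  rw [charpoly3]; simp [coeff_C]

theorem tr3_eq (S : M F) : tr3 S = S.trace := by
  simp [Matrix.trace, Fin.sum_univ_three, tr3]

theorem tr3_conj {x y : M F} (h : y * x = 1) (S : M F) : tr3 (x * S * y) = tr3 S := by
  rw [tr3_eq, tr3_eq, Matrix.trace_mul_comm, ← mul_assoc, h, one_mul]

theorem det_conj' {x y : M F} (h : y * x = 1) (S : M F) : (x * S * y).det = S.det := by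
  rw [Matrix.det_mul_comm, ← mul_assoc, h, one_mul]

theorem c23_conj {x y : M F} (h : y * x = 1) (S : M F) : c23 (x * S * y) = c23 S := by
  rw [c23_coeff, c23_coeff, Matrix.charpoly_mul_comm, ← mul_assoc, h, one_mul]

theorem Pc_conj {x y : M F} (h : y * x = 1) (g1 g2 g3 : F) (S : M F) :
    Pc g1 g2 g3 (x * S * y) ↔ Pc g1 g2 g3 S := by
  rw [Pc, tr3_conj h, det_conj' h, c23_conj h, Pc]

theorem CR_conj {x y : M F} (h : y * x = 1) (r : Fin 3 → F) (S : M F) :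
    CR r (x * S * y) ↔ CR r S := Pc_conj h _ _ _ _

theorem CR_comm (r : Fin 3 → F) (S T : M F) : CR r (S * T) ↔ CR r (T * S) := by
  rw [CR, CR, Pc, Pc, tr3_eq, tr3_eq, c23_coeff, c23_coeff, Matrix.charpoly_mul_comm,
    Matrix.trace_mul_comm, Matrix.det_mul_comm]

theorem RU_conj {x y : M F} (h : y * x = 1) (h' : x * y = 1) (S : M F) :
    RU (x * S * y) ↔ RU S := by
  rw [RU, Pc_conj h, RU]
  have e : (x * S * y - 1) * (x * S * y - 1) = x * ((S - 1) * (S - 1)) * y := by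
    have e1 : x * S * y - 1 = x * (S - 1) * y := by
      rw [mul_sub, sub_mul, mul_one, h']
    rw [e1]
    calc _ = x * (S - 1) * (y * x) * (S - 1) * y := by simp only [mul_assoc]
      _ = _ := by rw [h, mul_one]; simp only [mul_assoc]
  rw [e]
  have : x * ((S - 1) * (S - 1)) * y = 0 ↔ (S - 1) * (S - 1) = 0 := by
    constructor
    · intro h0
      calc (S - 1) * (S - 1) = (y * x) * ((S - 1) * (S - 1)) * (y * x) := by rw [h]; simp
        _ = y * (x * ((S - 1) * (S - 1)) * y) * x := by simp only [mul_assoc]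
        _ = 0 := by rw [h0]; simp
    · intro h0; rw [h0]; simp
  rw [Ne, Ne, this]

/-- conjugation as an equivalence -/
def conjE (x y : M F) (h : y * x = 1) (h' : x * y = 1) : M F ≃ M F where
  toFun S := x * S * y
  invFun S := y * S * x
  left_inv S := by
    show y * (x * S * y) * x = S
    calc _ = (y * x) * S * (y * x) := by simp only [mul_assoc]
      _ = S := by rw [h]; simp
  right_inv S := by
    show x * (y * S * x) * y = S
    calc _ = (x * y) * S * (x * y) := by simp only [mul_assoc]
      _ = S := by rw [h']; simp

structure Good (r : Fin 3 → F) : Prop where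
  h01 : r 0 ≠ r 1
  h02 : r 0 ≠ r 2
  h12 : r 1 ≠ r 2
  h0 : r 0 ≠ 0
  h1 : r 1 ≠ 0
  h2 : r 2 ≠ 0

theorem IsConj_Pc {S T : M F} (h : IsConj S T) (g1 g2 g3 : F) : Pc g1 g2 g3 S → Pc g1 g2 g3 T := by
  obtain ⟨c, hc⟩ := h
  intro hS
  have h1 : T = c.1 * S * (c⁻¹).1 := by
    rw [show (c : M F) * S = T * c from hc, mul_assoc, Units.mul_inv, mul_one]
  rw [h1, Pc_conj (Units.inv_mul c)]; exact hS

theorem isConj_of (S T P : M F) (hP : P.det ≠ 0) (h : P * S = T * P) : IsConj S T := by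
  have hu : IsUnit P := (Matrix.isUnit_iff_isUnit_det P).2 (isUnit_iff_ne_zero.2 hP)
  obtain ⟨u, rfl⟩ := hu
  exact ⟨u, h⟩

theorem eig_exists {r : Fin 3 → F} {S : M F} (h : CR r S) (i : Fin 3) :
    ∃ v : Fin 3 → F, v ≠ 0 ∧ S *ᵥ v = r i • v := by
  have hd : (S - Matrix.scalar (Fin 3) (r i)).det = 0 := by
    obtain ⟨h1, h2, h3⟩ := h
    rw [Matrix.det_fin_three] at h3 ⊢
    simp only [tr3, c23] at h1 h2
    fin_cases i <;> simp [Matrix.scalar_apply] 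
    · linear_combination h3 - r 0 * h2 + r 0 ^ 2 * h1
    · linear_combination h3 - r 1 * h2 + r 1 ^ 2 * h1
    · linear_combination h3 - r 2 * h2 + r 2 ^ 2 * h1
  obtain ⟨v, hv, hv'⟩ := Matrix.exists_mulVec_eq_zero_iff.2 hd
  refine ⟨v, hv, ?_⟩
  rw [Matrix.sub_mulVec, sub_eq_zero] at hv'
  rw [hv']; simp [Matrix.scalar_apply]

theorem isConj_diag_iff {r : Fin 3 → F} (hr : Function.Injective r) (S : M F) :
    IsConj (Matrix.diagonal r) S ↔ CR r S := by
  constructor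
  · intro h
    refine IsConj_Pc h _ _ _ ⟨?_, ?_, ?_⟩
    · simp [tr3]
    · simp [c23]
    · rw [Matrix.det_diagonal, Fin.prod_univ_three]
  · intro h
    choose v hv0 hv using eig_exists h
    have hli : LinearIndependent F v := by
      refine Module.End.eigenvectors_linearIndependent' (Matrix.toLin' S) r hr v fun i => ?_
      rw [Module.End.hasEigenvector_iff, Module.End.mem_eigenspace_iff]
      exact ⟨by simpa using hv i, hv0 i⟩
    have hu : IsUnit (Matrix.of v) := Matrix.linearIndependent_rows_iff_isUnit.1 hli
    refine isConj_of _ _ (Matrix.of v)ᵀ ?_ ?_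
    · rw [Matrix.det_transpose]
      exact isUnit_iff_ne_zero.1 ((Matrix.isUnit_iff_isUnit_det _).1 hu)
    · ext i j
      have := congrFun (hv j) i
      simp only [Matrix.mul_diagonal, Matrix.transpose_apply, Matrix.of_apply]
      simp only [Matrix.mulVec, dotProduct, Pi.smul_apply, smul_eq_mul] at this
      rw [Matrix.mul_apply]
      simp only [Matrix.transpose_apply, Matrix.of_apply]
      rw [this, mul_comm]

def J3 : M F := !![1, 1, 0; 0, 1, 1; 0, 0, 1]

theorem RU_J3 : RU (J3 : M F) := by
  refine ⟨⟨?_, ?_, ?_⟩, ?_⟩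
  · simp [tr3, J3]; norm_num
  · simp [c23, J3]; norm_num
  · simp [J3, Matrix.det_fin_three]
  · intro h
    have := congrFun (congrFun h 0) 2
    simp [J3, Matrix.mul_apply, Fin.sum_univ_three] at this

open Polynomial in
theorem cube_zero {T : M F} (h : Pc 3 3 1 T) : (T - 1) * (T - 1) * (T - 1) = 0 := by
  have := Matrix.aeval_self_charpoly T
  rw [charpoly3, h.1, h.2.1, h.2.2] at this
  simp [Algebra.algebraMap_eq_smul_one] at this
  rw [← this]
  have e3 : ∀ X : M F, (3 : F) • X = (3 : ℕ) • X := fun X => ofNat_smul_eq_nsmul F 3 X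
  rw [e3, e3]
  noncomm_ring

theorem isConj_J3_iff (T : M F) : IsConj J3 T ↔ RU T := by
  constructor
  · rintro ⟨c, hc⟩
    have h1 : T = c.1 * J3 * (c⁻¹).1 := by
      rw [show c.1 * J3 = T * c.1 from hc, mul_assoc, Units.mul_inv, mul_one]
    rw [h1, RU_conj (Units.inv_mul c) (Units.mul_inv c)]
    exact RU_J3
  · rintro ⟨h, hn⟩
    set N := T - 1 with hN
    have hT : T = N + 1 := by simp [hN]
    have h3 : N * N * N = 0 := cube_zero h
    obtain ⟨j, hj⟩ : ∃ j, (N * N).col j ≠ 0 := by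
      by_contra hc
      push Not at hc
      apply hn
      ext i j
      exact congrFun (hc j) i
    let u : Fin 3 → F := Pi.single j 1
    have hu : N *ᵥ (N *ᵥ u) ≠ 0 := by
      rw [Matrix.mulVec_mulVec]; simpa [u] using hj
    have hNNN : N *ᵥ (N *ᵥ (N *ᵥ u)) = 0 := by
      rw [Matrix.mulVec_mulVec, Matrix.mulVec_mulVec, h3, Matrix.zero_mulVec]
    let P : M F := (Matrix.of ![N *ᵥ (N *ᵥ u), N *ᵥ u, u])ᵀ
    have hP : ∀ x : Fin 3 → F, P *ᵥ x = x 0 • N *ᵥ (N *ᵥ u) + x 1 • N *ᵥ u + x 2 • u := by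
      intro x
      ext i
      simp [P, Matrix.mulVec, dotProduct, Fin.sum_univ_three]
      ring
    refine isConj_of _ _ P ?_ ?_
    · intro hd
      obtain ⟨x, hx0, hx⟩ := Matrix.exists_mulVec_eq_zero_iff.2 hd
      rw [hP] at hx
      have h2 : x 2 = 0 := by
        have := congrArg (fun z => N *ᵥ (N *ᵥ z)) hx
        simp only [Matrix.mulVec_add, Matrix.mulVec_smul, hNNN, Matrix.mulVec_zero, smul_zero, zero_add, smul_eq_zero] at this
        exact this.resolve_right hu
      simp only [h2, zero_smul, add_zero] at hx
      have h1 : x 1 = 0 := by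
        have := congrArg (fun z => N *ᵥ z) hx
        simp only [Matrix.mulVec_add, Matrix.mulVec_smul, hNNN, Matrix.mulVec_zero, smul_zero, zero_add, smul_eq_zero] at this
        exact this.resolve_right hu
      simp only [h1, zero_smul, add_zero] at hx
      have h0 : x 0 = 0 := (smul_eq_zero.1 hx).resolve_right hu
      apply hx0
      ext i; fin_cases i <;> simp [h0, h1, h2]
    · refine Matrix.ext_of_mulVec_single fun i => ?_
      rw [← Matrix.mulVec_mulVec, ← Matrix.mulVec_mulVec, hP, hP, hT]
      simp only [Matrix.add_mulVec, Matrix.mulVec_add, Matrix.mulVec_smul, Matrix.one_mulVec, hNNN]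
      fin_cases i <;> simp [J3, add_comm]

end GL3Q

namespace GL3Q
set_option linter.unusedSectionVars false
set_option linter.unusedVariables false
open Matrix

section
variable {F : Type*} [Field F] [Fintype F]

/-- cardinality as an integer -/
noncomputable def Q (F : Type*) [Fintype F] : ℤ := (Fintype.card F : ℤ)

theorem cnt_triv : cnt (fun _ : F => True) = Q F := cnt_true
theorem cnt_nz : cnt (fun x : F => x ≠ 0) = Q F - 1 := cnt_ne 0

theorem cnt_p2 (P1 P2 : F → Prop) :
    cnt (fun z : F × F => P1 z.1 ∧ P2 z.2) = cnt P1 * cnt P2 := cnt_prod _ _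

theorem cnt_p3 (P1 P2 P3 : F → Prop) :
    cnt (fun z : F × F × F => P1 z.1 ∧ P2 z.2.1 ∧ P3 z.2.2) = cnt P1 * cnt P2 * cnt P3 := by
  rw [cnt_prod P1 (fun w : F × F => P2 w.1 ∧ P3 w.2), cnt_p2]; ring

/-- the (negated) cubic -/
def ga (g1 g2 g3 t : F) : F := g3 - g2 * t + g1 * t ^ 2 - t ^ 3

/-- matrices sending the second basis vector to `l` times the first -/
def Sh (l : F) (T : M F) : Prop := T 0 1 = l ∧ T 1 1 = 0 ∧ T 2 1 = 0

/-- parameter constraint -/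
def Kc (l g1 g2 g3 : F) (z : F × F × F × F) : Prop :=
  z.1 * (l * z.2.2.2 + z.2.2.1 * z.2.1) = ga g1 g2 g3 z.2.1

def Cf (l g1 g2 : F) (z : F × F × F × F) : F :=
  ((g1 - z.2.1) * z.2.1 - z.2.2.1 * z.1 - g2) / l

/-- parametrisation: `z = (E,G,B,D)` -/
def mkT (l g1 g2 : F) (z : F × F × F × F) : M F :=
  !![g1 - z.2.1, l, z.2.2.1; Cf l g1 g2 z, 0, z.2.2.2; z.1, 0, z.2.1]

def unT (T : M F) : F × F × F × F := (T 2 0, T 2 2, T 0 2, T 1 2)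

theorem mkT_unT {l g1 g2 g3 : F} (hl : l ≠ 0) {T : M F} (h : Pc g1 g2 g3 T) (hs : Sh l T) :
    mkT l g1 g2 (unT T) = T := by
  obtain ⟨h1, h2, h3⟩ := h
  obtain ⟨s1, s2, s3⟩ := hs
  simp only [tr3, c23, s1, s2, s3] at h1 h2
  have hC : Cf l g1 g2 (unT T) = T 1 0 := by
    simp only [Cf, unT]
    rw [div_eq_iff hl, ← h1]
    linear_combination h2
  ext i j
  fin_cases i <;> fin_cases j <;> simp [mkT, hC] <;> simp [unT, s1, s2, s3]
  rw [← h1]; ring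

theorem Kc_unT {l g1 g2 g3 : F} {T : M F} (h : Pc g1 g2 g3 T) (hs : Sh l T) :
    Kc l g1 g2 g3 (unT T) := by
  obtain ⟨h1, h2, h3⟩ := h
  obtain ⟨s1, s2, s3⟩ := hs
  simp only [tr3, c23, s1, s2, s3] at h1 h2
  rw [Matrix.det_fin_three] at h3
  simp only [s1, s2, s3] at h3
  simp only [Kc, unT, ga]
  linear_combination h3 - T 2 2 * h2 + T 2 2 ^ 2 * h1

theorem Pc_mkT {l g1 g2 g3 : F} (hl : l ≠ 0) {z : F × F × F × F} (h : Kc l g1 g2 g3 z) :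
    Pc g1 g2 g3 (mkT l g1 g2 z) := by
  have hC : l * Cf l g1 g2 z = (g1 - z.2.1) * z.2.1 - z.2.2.1 * z.1 - g2 := by
    rw [Cf]; field_simp
  simp only [Kc, ga] at h
  refine ⟨?_, ?_, ?_⟩
  · simp [tr3, mkT]
  · simp [c23, mkT]; linear_combination -hC
  · rw [Matrix.det_fin_three]; simp [mkT]; linear_combination h - z.2.1 * hC

theorem Sh_mkT (l g1 g2 : F) (z : F × F × F × F) : Sh l (mkT l g1 g2 z) := by
  simp [Sh, mkT]

/-- counting matrices of the given shape by parameters -/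
theorem shape {l : F} (hl : l ≠ 0) (g1 g2 g3 : F) (X : M F → Prop) :
    cnt (fun T : M F => Pc g1 g2 g3 T ∧ Sh l T ∧ X T) =
    cnt (fun z : F × F × F × F => Kc l g1 g2 g3 z ∧ X (mkT l g1 g2 z)) := by
  refine cnt_bij unT (mkT l g1 g2) ?_ ?_ ?_ ?_
  · rintro T ⟨h, hs, hx⟩
    exact ⟨Kc_unT h hs, by rwa [mkT_unT hl h hs]⟩
  · rintro z ⟨h, hx⟩
    exact ⟨Pc_mkT hl h, Sh_mkT _ _ _ _, hx⟩
  · rintro T ⟨h, hs, hx⟩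
    exact mkT_unT hl h hs
  · rintro z _
    simp [unT, mkT]

theorem RU_mkT {l : F} (hl : l ≠ 0) {z : F × F × F × F} (h : Kc l 3 3 1 z) :
    (mkT l 3 3 z - 1) * (mkT l 3 3 z - 1) ≠ 0 ↔
      ¬ (z.1 = 0 ∧ z.2.1 = 1 ∧ z.2.2.1 + l * z.2.2.2 = 0) := by
  have hC : l * Cf l 3 3 z = (3 - z.2.1) * z.2.1 - z.2.2.1 * z.1 - 3 := by
    rw [Cf]; field_simp
  rw [not_iff_not]
  constructor
  · intro h0
    have e21 := congrFun (congrFun h0 2) 1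
    have e01 := congrFun (congrFun h0 0) 1
    have e02 := congrFun (congrFun h0 0) 2
    simp [mkT, Matrix.mul_apply, Fin.sum_univ_three] at e21 e01 e02
    have h1 : z.1 = 0 := e21.resolve_right hl
    have h2 : z.2.1 = 1 := by
      have : l * (1 - z.2.1) = 0 := by linear_combination e01
      rcases mul_eq_zero.1 this with h | h
      · exact absurd h hl
      · linear_combination -h
    refine ⟨h1, h2, ?_⟩
    rw [h2] at e02
    linear_combination e02
  · rintro ⟨h1, h2, h3⟩
    have hC' : l * Cf l 3 3 z = -1 := by rw [hC, h1, h2]; ring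
    have hB : z.2.2.1 = - l * z.2.2.2 := by linear_combination h3
    ext i j
    fin_cases i <;> fin_cases j <;>
      simp [mkT, Matrix.mul_apply, Fin.sum_univ_three, h1, h2, hB] <;> 
      first | linear_combination hC' | linear_combination Cf l 3 3 z * hC' | linear_combination - z.2.2.2 * hC' | ring

theorem shapeRU {l : F} (hl : l ≠ 0) (X : M F → Prop) :
    cnt (fun T : M F => RU T ∧ Sh l T ∧ X T) =
    cnt (fun z : F × F × F × F => Kc l 3 3 1 z ∧ X (mkT l 3 3 z) ∧
      ¬ (z.1 = 0 ∧ z.2.1 = 1 ∧ z.2.2.1 + l * z.2.2.2 = 0)) := by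
  have := shape hl 3 3 1 (fun T => X T ∧ (T - 1) * (T - 1) ≠ 0)
  rw [cnt_congr (Q := fun T : M F => RU T ∧ Sh l T ∧ X T)] at this
  · rw [this]
    exact cnt_congr fun z => and_congr_right fun h => by rw [RU_mkT hl h]
  · intro T; rw [RU]; tauto

end
end GL3Q

namespace GL3Q
set_option linter.unusedSectionVars false
set_option linter.unusedVariables false
set_option linter.unusedSimpArgs false
open Matrix

section
variable {F : Type*} [Field F] [Fintype F]

/-- number of roots of the cubic -/
noncomputable def Rt (g1 g2 g3 : F) : ℤ := cnt (fun t : F => ga g1 g2 g3 t = 0)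

theorem cnt_TT (P : F → Prop) :
    cnt (fun w : F × F × F => P w.1 ∧ True ∧ True) = cnt P * Q F ^ 2 := by
  rw [cnt_p3 P (fun _ => True) (fun _ => True), cnt_triv]; ring

theorem cnt_T (P : F → Prop) :
    cnt (fun w : F × F => P w.1 ∧ True) = cnt P * Q F := by
  rw [cnt_p2 P (fun _ => True), cnt_triv]

theorem z_E0 (l g1 g2 g3 : F) :
    cnt (fun z : F × F × F × F => Kc l g1 g2 g3 z ∧ z.1 = 0) = Rt g1 g2 g3 * Q F ^ 2 := by
  rw [cnt_bij (Q := fun w : F × F × F => ga g1 g2 g3 w.1 = 0 ∧ True ∧ True)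
    (fun z => (z.2.1, z.2.2.1, z.2.2.2)) (fun w => (0, w.1, w.2.1, w.2.2))]
  · rw [cnt_TT (fun x => ga g1 g2 g3 x = 0), Rt]
  · rintro ⟨E, G, B, D⟩ ⟨h, h0⟩
    simp only [Kc] at h h0 ⊢
    subst h0; simp at h; simp [h]
  · rintro ⟨G, B, D⟩ ⟨h, -⟩
    simp only [Kc] at h ⊢
    simp [h]
  · rintro ⟨E, G, B, D⟩ ⟨h, h0⟩
    simp only at h0; simp [h0]
  · rintro ⟨G, B, D⟩ _; rfl

theorem z_En {l : F} (hl : l ≠ 0) (g1 g2 g3 : F) :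
    cnt (fun z : F × F × F × F => Kc l g1 g2 g3 z ∧ z.1 ≠ 0) = (Q F - 1) * Q F ^ 2 := by
  rw [cnt_bij (Q := fun w : F × F × F => w.1 ≠ 0 ∧ True ∧ True)
    (fun z => (z.1, z.2.1, z.2.2.1))
    (fun w => (w.1, w.2.1, w.2.2, (ga g1 g2 g3 w.2.1 / w.1 - w.2.2 * w.2.1) / l))]
  · rw [cnt_TT (fun x => x ≠ 0), cnt_nz]
  · rintro ⟨E, G, B, D⟩ ⟨h, h0⟩
    simpa using h0
  · rintro ⟨E, G, B⟩ ⟨h, -⟩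
    simp only [Kc] at h ⊢
    refine ⟨?_, h⟩
    field_simp; ring
  · rintro ⟨E, G, B, D⟩ ⟨h, h0⟩
    simp only [Kc] at h h0 ⊢
    rw [← h]
    simp only [Prod.mk.injEq, true_and]
    field_simp; ring
  · rintro ⟨E, G, B⟩ _; rfl

theorem z_all {l : F} (hl : l ≠ 0) (g1 g2 g3 : F) :
    cnt (fun z : F × F × F × F => Kc l g1 g2 g3 z) =
      (Q F - 1) * Q F ^ 2 + Rt g1 g2 g3 * Q F ^ 2 := by
  rw [cnt_split _ (fun z => z.1 = 0), z_E0, z_En hl]; ring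

theorem z_GkE {l : F} (hl : l ≠ 0) (g1 g2 g3 k : F) (hg : g3 ≠ 0) :
    cnt (fun z : F × F × F × F => Kc l g1 g2 g3 z ∧ z.2.1 = k * z.1) = (Q F - 1) * Q F := by
  rw [cnt_bij (Q := fun w : F × F => w.1 ≠ 0 ∧ True)
    (fun z => (z.1, z.2.2.1))
    (fun w => (w.1, k * w.1, w.2, (ga g1 g2 g3 (k * w.1) / w.1 - w.2 * (k * w.1)) / l))]
  · rw [cnt_T (fun x => x ≠ 0), cnt_nz]
  · rintro ⟨E, G, B, D⟩ ⟨h, h0⟩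
    simp only [Kc] at h h0 ⊢
    refine ⟨?_, trivial⟩
    rintro rfl
    rw [mul_zero] at h0
    subst h0
    simp [ga] at h
    exact hg h.symm
  · rintro ⟨E, B⟩ ⟨h, -⟩
    simp only [Kc] at h ⊢
    refine ⟨?_, trivial⟩
    field_simp; ring
  · rintro ⟨E, G, B, D⟩ ⟨h, h0⟩
    simp only [Kc] at h h0 ⊢
    subst h0
    have hE : E ≠ 0 := by
      rintro rfl
      simp [ga] at h
      exact hg h.symm
    rw [← h]
    simp only [Prod.mk.injEq, true_and]
    field_simp; ring
  · rintro ⟨E, B⟩ _; rfl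

theorem Cf_mul {l : F} (hl : l ≠ 0) (g1 g2 E G B D : F) :
    l * Cf l g1 g2 (E, G, B, D) = (g1 - G) * G - B * E - g2 := by
  simp only [Cf]; field_simp

theorem Kc_det {l : F} (hl : l ≠ 0) (g1 g2 g3 E G B D : F) :
    Kc l g1 g2 g3 (E, G, B, D) ↔ l * (D * E - Cf l g1 g2 (E, G, B, D) * G) = g3 := by
  have h := Cf_mul hl g1 g2 E G B D
  simp only [Kc, ga]
  constructor
  · intro h1; linear_combination h1 - G * h
  · intro h1; linear_combination h1 + G * h

theorem z_C0 {l : F} (hl : l ≠ 0) (g1 g2 g3 : F) (hg : g3 ≠ 0) :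
    cnt (fun z : F × F × F × F => Kc l g1 g2 g3 z ∧ Cf l g1 g2 z = 0) = (Q F - 1) * Q F := by
  rw [cnt_bij (Q := fun w : F × F => w.1 ≠ 0 ∧ True)
    (fun z => (z.1, z.2.1))
    (fun w => (w.1, w.2, ((g1 - w.2) * w.2 - g2) / w.1, g3 / (l * w.1)))]
  · rw [cnt_T (fun x => x ≠ 0), cnt_nz]
  · rintro ⟨E, G, B, D⟩ ⟨h, h0⟩
    rw [Kc_det hl, h0] at h
    refine ⟨?_, trivial⟩
    rintro rfl
    simp at h
    exact hg h.symm
  · rintro ⟨E, G⟩ ⟨h, -⟩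
    simp only at h
    have h0 : Cf l g1 g2 (E, G, ((g1 - G) * G - g2) / E, g3 / (l * E)) = 0 := by
      simp only [Cf]; field_simp; ring
    refine ⟨?_, h0⟩
    rw [Kc_det hl, h0]; field_simp; ring
  · rintro ⟨E, G, B, D⟩ ⟨h, h0⟩
    have h1 := Cf_mul hl g1 g2 E G B D
    rw [Kc_det hl, h0] at h
    rw [h0] at h1
    have hE : E ≠ 0 := by
      rintro rfl
      simp at h
      exact hg h.symm
    simp only [Prod.mk.injEq, true_and]
    constructor
    · field_simp; linear_combination -h1
    · field_simp; linear_combination -h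
  · rintro ⟨E, G⟩ _; rfl

theorem z_DkC {l : F} (hl : l ≠ 0) (g1 g2 g3 k : F) (hg : g3 ≠ 0) :
    cnt (fun z : F × F × F × F => Kc l g1 g2 g3 z ∧ z.2.2.2 = k * Cf l g1 g2 z) =
      Rt g1 g2 g3 * Q F + (Q F - 1) ^ 2 := by
  rw [cnt_split _ (fun z => z.1 = 0)]
  congr 1
  · rw [cnt_bij (Q := fun w : F × F => ga g1 g2 g3 w.1 = 0 ∧ True)
      (fun z => (z.2.1, z.2.2.1))
      (fun w => (0, w.1, w.2, k * (((g1 - w.1) * w.1 - g2) / l)))]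
    · rw [cnt_T (fun x => ga g1 g2 g3 x = 0), Rt]
    · rintro ⟨E, G, B, D⟩ ⟨⟨h, h1⟩, h0⟩
      simp only [Kc] at h h0 ⊢
      subst h0; simp at h; simp [h]
    · rintro ⟨G, B⟩ ⟨h, -⟩
      simp only [Kc, Cf] at h ⊢
      simp [h]
    · rintro ⟨E, G, B, D⟩ ⟨⟨h, h1⟩, h0⟩
      simp only [Cf] at h0 h1; subst h0; simp [h1]
    · rintro ⟨G, B⟩ _; rfl
  · rw [cnt_bij (Q := fun w : F × F => w.1 ≠ 0 ∧ w.2 ≠ 0)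
      (fun z => (z.1, Cf l g1 g2 z))
      (fun w => (w.1, k * w.1 - g3 / (l * w.2),
        ((g1 - (k * w.1 - g3 / (l * w.2))) * (k * w.1 - g3 / (l * w.2)) - g2 - l * w.2) / w.1,
        k * w.2))]
    · rw [cnt_p2 (fun x => x ≠ 0) (fun x => x ≠ 0), cnt_nz]; ring
    · rintro ⟨E, G, B, D⟩ ⟨⟨h, h1⟩, h0⟩
      refine ⟨h0, ?_⟩
      intro h2
      simp only at h1 h2
      rw [Kc_det hl, h2, h1, h2] at h
      simp at h
      exact hg h.symm
    · rintro ⟨E, C⟩ ⟨hE, hC⟩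
      simp only at hE hC ⊢
      have h0 : Cf l g1 g2 (E, k * E - g3 / (l * C),
        ((g1 - (k * E - g3 / (l * C))) * (k * E - g3 / (l * C)) - g2 - l * C) / E,
        k * C) = C := by
        generalize k * E - g3 / (l * C) = G
        simp only [Cf]; field_simp; ring
      refine ⟨⟨?_, ?_⟩, hE⟩
      · rw [Kc_det hl, h0]; field_simp; ring
      · rw [h0]
    · rintro ⟨E, G, B, D⟩ ⟨⟨h, h1⟩, h0⟩
      have h2 := Cf_mul hl g1 g2 E G B D
      rw [Kc_det hl] at h
      simp only at h1 h0
      generalize Cf l g1 g2 (E, G, B, D) = C at *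
      subst h1
      have hC : C ≠ 0 := by
        rintro rfl
        simp at h
        exact hg h.symm
      have hG : k * E - g3 / (l * C) = G := by
        field_simp; linear_combination h
      simp only [Prod.mk.injEq, true_and, and_true]
      rw [hG]
      refine ⟨rfl, ?_⟩
      field_simp; linear_combination -h2
    · rintro ⟨E, C⟩ ⟨hE, hC⟩
      simp only at hE hC ⊢
      simp only [Prod.mk.injEq, true_and]
      generalize k * E - g3 / (l * C) = G
      simp only [Cf]; field_simp; ring

end
end GL3Q

namespace GL3Q
set_option linter.unusedSectionVars false
set_option linter.unusedVariables false
set_option linter.unusedSimpArgs false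
open Matrix

section
variable {F : Type*} [Field F] [Fintype F]

theorem z_cyc {l : F} (hl : l ≠ 0) (g1 g2 g3 a b g0 u : F) (hg : g3 ≠ 0) (ha : a ≠ 0) (hb : b ≠ 0)
    (hab : a ≠ b) (h0 : g0 * g3 = l * a * b) :
    cnt (fun z : F × F × F × F => Kc l g1 g2 g3 z ∧ z.2.2.2 = a + b - g0 * z.1 - u * z.2.1) =
      Rt g1 g2 g3 * Q F + 2 * Q F + (Q F - 1) ^ 2 := by
  have hg0 : g0 = l * a * b / g3 := by field_simp; exact h0
  rw [cnt_split _ (fun z => z.1 = 0), cnt_split (fun z : F × F × F × F => _ ∧ ¬ _)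
    (fun z => z.2.1 = 0), add_assoc]
  congr 1
  · rw [cnt_bij (Q := fun w : F × F => ga g1 g2 g3 w.1 = 0 ∧ True)
      (fun z => (z.2.1, z.2.2.1)) (fun w => (0, w.1, w.2, a + b - u * w.1))]
    · rw [cnt_T (fun x => ga g1 g2 g3 x = 0), Rt]
    · rintro ⟨E, G, B, D⟩ ⟨⟨h, h1⟩, h0⟩
      simp only [Kc] at h h0 ⊢
      subst h0; simp at h; simp [h]
    · rintro ⟨G, B⟩ ⟨h, -⟩
      simp only [Kc, Cf] at h ⊢
      simp [h]
    · rintro ⟨E, G, B, D⟩ ⟨⟨h, h1⟩, h0⟩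
      simp only at h0 h1; subst h0; simp [h1]
    · rintro ⟨G, B⟩ _; rfl
  congr 1
  · have key : ∀ E : F, E * (l * (a + b - g0 * E)) = g3 ↔ (E = g3 / (l * a) ∨ E = g3 / (l * b)) := by
      intro E
      rw [eq_div_iff (mul_ne_zero hl ha), eq_div_iff (mul_ne_zero hl hb), hg0]
      rw [← sub_eq_zero, ← sub_eq_zero (b := g3), ← sub_eq_zero (a := E * (l * b)), ← mul_eq_zero]
      have : E * (l * (a + b - l * a * b / g3 * E)) - g3 =
        -((E * (l * a) - g3) * (E * (l * b) - g3)) / g3 := by field_simp; ring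
      rw [this, div_eq_zero_iff, neg_eq_zero]
      simp [hg]
    rw [cnt_bij (Q := fun w : F × F => (w.1 = g3 / (l * a) ∨ w.1 = g3 / (l * b)) ∧ True)
      (fun z => (z.1, z.2.2.1)) (fun w => (w.1, 0, w.2, a + b - g0 * w.1))]
    · rw [cnt_T (fun x => x = g3 / (l * a) ∨ x = g3 / (l * b)),
        cnt_two (g3 / (l * a)) (g3 / (l * b)) _ (fun x => Iff.rfl)]
      intro h
      rw [div_eq_div_iff (mul_ne_zero hl ha) (mul_ne_zero hl hb)] at h
      exact hab (mul_left_cancel₀ hl (mul_left_cancel₀ hg h.symm))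
    · rintro ⟨E, G, B, D⟩ ⟨⟨⟨h, h1⟩, h0⟩, h2⟩
      simp only [Kc, ga] at h h0 h1 h2 ⊢
      subst h2
      subst h1
      rw [← key]
      refine ⟨?_, trivial⟩
      linear_combination h
    · rintro ⟨E, B⟩ ⟨h, -⟩
      simp only [] at h
      have hE : E ≠ 0 := by
        rcases h with rfl | rfl
        · exact div_ne_zero hg (mul_ne_zero hl ha)
        · exact div_ne_zero hg (mul_ne_zero hl hb)
      rw [← key] at h
      simp only [Kc, ga]
      refine ⟨⟨⟨?_, ?_⟩, hE⟩, trivial⟩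
      · linear_combination h
      · ring
    · rintro ⟨E, G, B, D⟩ ⟨⟨⟨h, h1⟩, h0⟩, h2⟩
      simp only at h2 h1
      subst h2; simp [h1]
    · rintro ⟨E, B⟩ _; rfl
  · rw [cnt_bij (Q := fun w : F × F => w.1 ≠ 0 ∧ w.2 ≠ 0)
      (fun z => (z.1, z.2.1))
      (fun w => (w.1, w.2, (ga g1 g2 g3 w.2 / w.1 - l * (a + b - g0 * w.1 - u * w.2)) / w.2,
         a + b - g0 * w.1 - u * w.2))]
    · rw [cnt_p2 (fun x => x ≠ 0) (fun x => x ≠ 0), cnt_nz]; ring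
    · rintro ⟨E, G, B, D⟩ ⟨⟨⟨h, h1⟩, h0⟩, h2⟩
      exact ⟨h0, h2⟩
    · rintro ⟨E, G⟩ ⟨hE, hG⟩
      simp only at hE hG
      refine ⟨⟨⟨?_, rfl⟩, hE⟩, hG⟩
      simp only [Kc]
      generalize a + b - g0 * E - u * G = D
      field_simp; ring
    · rintro ⟨E, G, B, D⟩ ⟨⟨⟨h, h1⟩, h0⟩, h2⟩
      simp only [Kc] at h h1 h0 h2 ⊢
      rw [← h1, ← h]
      simp only [Prod.mk.injEq, true_and, and_true]
      field_simp; ring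
    · rintro ⟨E, G⟩ _; rfl

theorem semi_key {l : F} (hl : l ≠ 0) (g1 g2 g3 a b x t : F) (hg : g3 ≠ 0) (ha : a ≠ 0) (hb : b ≠ 0)
    (h0 : - (x * t) * g3 = l * a * b) (G : F) (hG : ga g1 g2 g3 G = 0) :
    ((g1 - G) * G - g2) / l * x + G * t = a + b ↔ (t * G = a ∨ t * G = b) := by
  have hG0 : G ≠ 0 := by
    rintro rfl
    simp [ga] at hG
    exact hg hG
  have hx : x ≠ 0 := by
    rintro rfl
    simp at h0
    tauto
  have ht : t ≠ 0 := by
    rintro rfl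
    simp at h0
    tauto
  have e : (g1 - G) * G - g2 = - g3 / G := by
    field_simp
    simp only [ga] at hG
    linear_combination hG
  have hg3 : g3 = - (l * a * b / (x * t)) := by
    field_simp
    linear_combination -h0
  rw [e, ← sub_eq_zero, ← sub_eq_zero (b := a), ← sub_eq_zero (b := b), ← mul_eq_zero]
  have : -g3 / G / l * x + G * t - (a + b) = (t * G - a) * (t * G - b) / (t * G) := by
    rw [hg3]; field_simp; ring
  rw [this, div_eq_zero_iff]
  simp [ht, hG0]

theorem z_semi_En {l : F} (hl : l ≠ 0) (g1 g2 g3 σ x y t : F) (hx : x ≠ 0) :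
    cnt (fun z : F × F × F × F => (Kc l g1 g2 g3 z ∧ Cf l g1 g2 z * x + z.1 * y + z.2.1 * t = σ)
      ∧ z.1 ≠ 0) = (Q F - 1) * Q F := by
  let B' : F → F → F := fun E G => ((g1 - G) * G - g2 - l * ((σ - E * y - G * t) / x)) / E
  rw [cnt_bij (Q := fun w : F × F => w.1 ≠ 0 ∧ True)
    (fun z => (z.1, z.2.1))
    (fun w => (w.1, w.2, B' w.1 w.2, (ga g1 g2 g3 w.2 / w.1 - B' w.1 w.2 * w.2) / l))]
  · rw [cnt_T (fun x => x ≠ 0), cnt_nz]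
  · rintro ⟨E, G, B, D⟩ ⟨⟨h, h1⟩, h0⟩
    exact ⟨h0, trivial⟩
  · rintro ⟨E, G⟩ ⟨hE, -⟩
    simp only at hE
    refine ⟨⟨?_, ?_⟩, hE⟩
    · simp only [Kc]; field_simp; ring
    · simp only [Cf, B']; field_simp; ring
  · rintro ⟨E, G, B, D⟩ ⟨⟨h, h1⟩, h0⟩
    have h2 := Cf_mul hl g1 g2 E G B D
    simp only at h1 h0 ⊢
    have hB : B' E G = B := by
      simp only [B']
      field_simp
      linear_combination l * h1 - x * h2
    rw [hB]
    simp only [Kc] at h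
    rw [← h]
    simp only [Prod.mk.injEq, true_and]
    field_simp; ring
  · rintro ⟨E, G⟩ _; rfl

theorem z_semi_E0 {l : F} (hl : l ≠ 0) (g1 g2 g3 a b x y t : F) (hg : g3 ≠ 0) (ha : a ≠ 0) (hb : b ≠ 0)
    (h0 : - (x * t) * g3 = l * a * b) :
    cnt (fun z : F × F × F × F => (Kc l g1 g2 g3 z ∧
        Cf l g1 g2 z * x + z.1 * y + z.2.1 * t = a + b) ∧ z.1 = 0)
      = cnt (fun G => ga g1 g2 g3 G = 0 ∧ (t * G = a ∨ t * G = b)) * Q F ^ 2 := by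
  rw [cnt_bij (Q := fun w : F × F × F =>
      (ga g1 g2 g3 w.1 = 0 ∧ (t * w.1 = a ∨ t * w.1 = b)) ∧ True ∧ True)
    (fun z => (z.2.1, z.2.2.1, z.2.2.2)) (fun w => (0, w.1, w.2.1, w.2.2))]
  · rw [cnt_TT (fun G => ga g1 g2 g3 G = 0 ∧ (t * G = a ∨ t * G = b))]
  · rintro ⟨E, G, B, D⟩ ⟨⟨h, h1⟩, h2⟩
    simp only [Kc, Cf] at h h1 h2
    subst h2
    have hG : ga g1 g2 g3 G = 0 := by simpa using h.symm
    refine ⟨⟨hG, ?_⟩, trivial, trivial⟩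
    rw [← semi_key hl g1 g2 g3 a b x t hg ha hb h0 G hG]
    simpa using h1
  · rintro ⟨G, B, D⟩ ⟨⟨hG, h1⟩, -⟩
    simp only at hG h1
    rw [← semi_key hl g1 g2 g3 a b x t hg ha hb h0 G hG] at h1
    simp only [Kc, Cf]
    refine ⟨⟨?_, ?_⟩, trivial⟩
    · simp [hG]
    · simpa using h1
  · rintro ⟨E, G, B, D⟩ ⟨h, h0⟩
    simp only at h0; simp [h0]
  · rintro ⟨G, B, D⟩ _; rfl

end
end GL3Q

namespace GL3Q
set_option linter.unusedSectionVars false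
set_option linter.unusedVariables false
set_option linter.unusedSimpArgs false
open Matrix

section
variable {F : Type*} [Field F] [Fintype F]

/-- first column is `l e₁` -/
def Ev (l : F) (S : M F) : Prop := S 0 0 = l ∧ S 1 0 = 0 ∧ S 2 0 = 0
/-- first column is `e₂` -/
def E12 (S : M F) : Prop := S 0 0 = 0 ∧ S 1 0 = 1 ∧ S 2 0 = 0

theorem Ev_mul {l m : F} {S T : M F} (hS : Ev l S) (hT : Ev m T) : Ev (l * m) (S * T) := by
  obtain ⟨a1, a2, a3⟩ := hS
  obtain ⟨b1, b2, b3⟩ := hT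
  simp [Ev, Matrix.mul_apply, Fin.sum_univ_three, a1, a2, a3, b1, b2, b3]

theorem Ev_conj {x y : M F} (h : y * x = 1) (hx : Ev 1 x) (hy : Ev 1 y) (l : F) (S : M F) :
    Ev l (x * S * y) ↔ Ev l S := by
  constructor
  · intro h1
    have h2 := Ev_mul (Ev_mul hy h1) hx
    have e : y * (x * S * y) * x = S := by
      calc _ = (y * x) * S * (y * x) := by simp only [mul_assoc]
        _ = S := by rw [h]; simp
    rw [e] at h2
    simpa using h2
  · intro h1
    simpa using Ev_mul (Ev_mul hx h1) hy

theorem CR_of_Ev {r : Fin 3 → F} (h0 : r 0 ≠ 0) {S : M F} (hS : Ev (r 0) S)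
    (hd : S.det = r 0 * r 1 * r 2) : CR r S ↔ tr3 S = r 0 + r 1 + r 2 := by
  constructor
  · exact fun h => h.1
  · intro h
    refine ⟨h, ?_, hd⟩
    obtain ⟨h1, h2, h3⟩ := hS
    rw [Matrix.det_fin_three] at hd
    simp only [tr3, h1, h2, h3] at h hd
    simp only [c23, h1, h2, h3]
    have : S 1 1 * S 2 2 - S 1 2 * S 2 1 = r 1 * r 2 := by
      apply mul_left_cancel₀ h0
      linear_combination hd
    linear_combination this + r 0 * h

theorem conj_mul {x y : M F} (h : y * x = 1) (h' : x * y = 1) (S T : M F) :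
    x * S * y * T = x * (S * (y * T * x)) * y := by
  calc x * S * y * T = x * S * y * T * (x * y) := by rw [h', mul_one]
    _ = _ := by simp only [mul_assoc]

/-- the local count -/
noncomputable def fc (P : M F → Prop) (r : Fin 3 → F) (h : M F) : ℤ :=
  cnt (fun T : M F => P T ∧ Ev (r 0) (T * h) ∧ CR r (T * h))

theorem fc_conj {x y : M F} (h : y * x = 1) (h' : x * y = 1) (hx : Ev 1 x) (hy : Ev 1 y)
    (P : M F → Prop) (hP : ∀ T, P (x * T * y) ↔ P T) (r : Fin 3 → F) (g : M F) :
    fc P r g = fc P r (y * g * x) := by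
  rw [fc, ← cnt_equiv (conjE x y h h')]
  refine cnt_congr fun T => ?_
  show P (x * T * y) ∧ Ev (r 0) (x * T * y * g) ∧ CR r (x * T * y * g) ↔ _
  rw [hP, conj_mul h h', Ev_conj h hx hy, CR_conj h]

theorem Ev_Sh {l : F} {T h : M F} (hh : E12 h) : Ev l (T * h) ↔ Sh l T := by
  obtain ⟨h1, h2, h3⟩ := hh
  simp [Ev, Sh, Matrix.mul_apply, Fin.sum_univ_three, h1, h2, h3]

theorem fc_eq {P : M F → Prop} {r : Fin 3 → F} {d : F} (hr : r 0 ≠ 0) (hP : ∀ T, P T → T.det = d)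
    {h : M F} (hh : E12 h) (hd : d * h.det = r 0 * r 1 * r 2) :
    fc P r h = cnt (fun T : M F => P T ∧ Sh (r 0) T ∧ tr3 (T * h) = r 0 + r 1 + r 2) := by
  refine cnt_congr fun T => ?_
  refine and_congr_right fun hp => ?_
  rw [← Ev_Sh (l := r 0) hh]
  refine and_congr_right fun he => ?_
  exact CR_of_Ev hr he (by rw [Matrix.det_mul, hP T hp, hd])

theorem mul3 (A B : M F) (i j : Fin 3) :
    (A * B) i j = A i 0 * B 0 j + A i 1 * B 1 j + A i 2 * B 2 j := by
  rw [Matrix.mul_apply, Fin.sum_univ_three]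

/-- normal form for the cyclic case -/
theorem cyc_nf {h : M F} (hh : E12 h) (hs : h 2 1 ≠ 0) :
    ∃ x y : M F, y * x = 1 ∧ x * y = 1 ∧ Ev 1 x ∧ Ev 1 y ∧ E12 (y * h * x) ∧
      (y * h * x) 0 1 = 0 ∧ (y * h * x) 1 1 = 0 ∧ (y * h * x) 2 1 = 1 := by
  obtain ⟨h1, h2, h3⟩ := hh
  let x : M F := !![1, 0, h 0 1; 0, 1, h 1 1; 0, 0, h 2 1]
  let y : M F := !![1, 0, - h 0 1 / h 2 1; 0, 1, - h 1 1 / h 2 1; 0, 0, 1 / h 2 1]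
  have hyx : y * x = 1 := by
    ext i j
    fin_cases i <;> fin_cases j <;> simp [x, y, Matrix.mul_apply, Fin.sum_univ_three] <;>
      field_simp <;> ring
  refine ⟨x, y, hyx, mul_eq_one_comm.1 hyx, ?_, ?_, ?_, ?_, ?_, ?_⟩
  · simp [Ev, x]
  · simp [Ev, y]
  · simp only [E12, mul3]; simp [x, y, h1, h2, h3]
  · simp only [mul3]; simp [x, y]; field_simp; ring
  · simp only [mul3]; simp [x, y]; field_simp; ring
  · simp only [mul3]; simp [x, y]; field_simp

theorem tr_mkT_mul (l g1 g2 : F) (z : F × F × F × F) (h : M F) (hh : E12 h) :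
    tr3 (mkT l g1 g2 z * h) = l + (Cf l g1 g2 z * h 0 1 + z.1 * h 0 2 + z.2.1 * h 2 2)
      + z.2.2.2 * h 2 1 := by
  obtain ⟨h1, h2, h3⟩ := hh
  simp [tr3, mkT, Matrix.mul_apply, Fin.sum_univ_three, h1, h2, h3]
  ring

theorem det_E12 {h : M F} (hh : E12 h) : h.det = - (h 0 1 * h 2 2) + h 0 2 * h 2 1 := by
  obtain ⟨h1, h2, h3⟩ := hh
  rw [Matrix.det_fin_three, h1, h2, h3]; ring

theorem Rt_RU : Rt (3 : F) 3 1 = 1 := by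
  refine cnt_one 1 fun x => ?_
  have : ga 3 3 1 x = (1 - x) ^ 3 := by simp only [ga]; ring
  rw [this, pow_eq_zero_iff (by norm_num), sub_eq_zero, eq_comm]

theorem ga_roots (r : Fin 3 → F) (x : F) :
    ga (r 0 + r 1 + r 2) (r 0 * r 1 + r 0 * r 2 + r 1 * r 2) (r 0 * r 1 * r 2) x = 0 ↔
      (x = r 0 ∨ x = r 1 ∨ x = r 2) := by
  have : ga (r 0 + r 1 + r 2) (r 0 * r 1 + r 0 * r 2 + r 1 * r 2) (r 0 * r 1 * r 2) x =
      - ((x - r 0) * ((x - r 1) * (x - r 2))) := by simp only [ga]; ring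
  rw [this, neg_eq_zero, mul_eq_zero, mul_eq_zero, sub_eq_zero, sub_eq_zero, sub_eq_zero]

theorem Rt_CR {r : Fin 3 → F} (hr : Good r) :
    Rt (r 0 + r 1 + r 2) (r 0 * r 1 + r 0 * r 2 + r 1 * r 2) (r 0 * r 1 * r 2) = 3 :=
  cnt_three _ _ _ hr.h01 hr.h02 hr.h12 (ga_roots r)

theorem prod_ne {r : Fin 3 → F} (hr : Good r) : r 0 * r 1 * r 2 ≠ 0 :=
  mul_ne_zero (mul_ne_zero hr.h0 hr.h1) hr.h2

/-- cyclic count for a general class -/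
theorem fcD_cyc {r b : Fin 3 → F} (hr : Good r) (hb : Good b) {h : M F} (hh : E12 h)
    (hs : h 2 1 ≠ 0) (hd : (b 0 * b 1 * b 2) * h.det = r 0 * r 1 * r 2) :
    fc (CR b) r h = Q F ^ 2 + 3 * Q F + 1 := by
  obtain ⟨x, y, hyx, hxy, hx, hy, h12, n1, n2, n3⟩ := cyc_nf hh hs
  rw [fc_conj hyx hxy hx hy _ (CR_conj hyx b)]
  rw [← det_conj' hxy h] at hd
  generalize y * h * x = h at *
  rw [fc_eq hr.h0 (fun T hT => hT.2.2) h12 hd]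
  unfold CR
  rw [shape hr.h0 _ _ _ (fun T => tr3 (T * h) = r 0 + r 1 + r 2)]
  have hdet := det_E12 h12
  rw [n1, n3] at hdet
  have e := z_cyc hr.h0 (b 0 + b 1 + b 2) (b 0 * b 1 + b 0 * b 2 + b 1 * b 2) (b 0 * b 1 * b 2)
    (r 1) (r 2) (h 0 2) (h 2 2) (prod_ne hb) hr.h1 hr.h2 hr.h12
    (by rw [← hd, hdet]; ring)
  rw [Rt_CR hb] at e
  rw [cnt_congr (Q := _), e]
  · ring
  · intro z
    rw [tr_mkT_mul _ _ _ _ _ h12, n1, n3]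
    refine and_congr_right fun _ => ?_
    constructor
    · intro h; linear_combination h
    · intro h; linear_combination h

theorem fcD_semi {r b : Fin 3 → F} (hr : Good r) (hb : Good b) {h : M F} (hh : E12 h)
    (hs : h 2 1 = 0) (hd : (b 0 * b 1 * b 2) * h.det = r 0 * r 1 * r 2)
    (hgen : ∀ j i, h 2 2 * b j ≠ r i) :
    fc (CR b) r h = Q F * (Q F - 1) := by
  rw [fc_eq hr.h0 (fun T hT => hT.2.2) hh hd]
  unfold CR
  rw [shape hr.h0 _ _ _ (fun T => tr3 (T * h) = r 0 + r 1 + r 2)]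
  have hdet := det_E12 hh
  rw [hs] at hdet
  have hx : h 0 1 ≠ 0 := by
    intro h0
    rw [hdet, h0] at hd
    apply prod_ne hr
    rw [← hd]; ring
  have e1 := z_semi_En hr.h0 (b 0 + b 1 + b 2) (b 0 * b 1 + b 0 * b 2 + b 1 * b 2) (b 0 * b 1 * b 2)
    (r 1 + r 2) (h 0 1) (h 0 2) (h 2 2) hx
  have e2 := z_semi_E0 hr.h0 (b 0 + b 1 + b 2) (b 0 * b 1 + b 0 * b 2 + b 1 * b 2) (b 0 * b 1 * b 2)
    (r 1) (r 2) (h 0 1) (h 0 2) (h 2 2) (prod_ne hb) hr.h1 hr.h2 (by rw [← hd, hdet]; ring)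
  rw [cnt_false (P := fun G : F => _ ∧ _), zero_mul] at e2
  · rw [cnt_congr (Q := _), cnt_split _ (fun z => z.1 = 0), e1, e2]
    · ring
    · intro z
      rw [tr_mkT_mul _ _ _ _ _ hh, hs]
      refine and_congr_right fun _ => ?_
      constructor
      · intro h; linear_combination h
      · intro h; linear_combination h
  · rintro G ⟨h1, h2⟩
    rw [ga_roots] at h1
    rcases h1 with rfl | rfl | rfl <;> rcases h2 with h2 | h2 <;> exact hgen _ _ h2

theorem fcRU_cyc {r : Fin 3 → F} (hr : Good r) {h : M F} (hh : E12 h)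
    (hs : h 2 1 ≠ 0) (hd : h.det = r 0 * r 1 * r 2) :
    fc RU r h = Q F ^ 2 + Q F := by
  obtain ⟨x, y, hyx, hxy, hx, hy, h12, n1, n2, n3⟩ := cyc_nf hh hs
  rw [fc_conj hyx hxy hx hy _ (RU_conj hyx hxy)]
  rw [← det_conj' hxy h] at hd
  generalize y * h * x = h at *
  rw [fc_eq (d := 1) hr.h0 (fun T hT => hT.1.2.2) h12 (by rw [one_mul, hd])]
  rw [shapeRU hr.h0 (fun T => tr3 (T * h) = r 0 + r 1 + r 2)]
  have hdet := det_E12 h12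
  rw [n1, n3] at hdet
  have e := z_cyc hr.h0 3 3 1
    (r 1) (r 2) (h 0 2) (h 2 2) one_ne_zero hr.h1 hr.h2 hr.h12
    (by rw [← hd, hdet]; ring)
  rw [Rt_RU, cnt_split _ (fun z : F × F × F × F =>
    (z.1 = 0 ∧ z.2.1 = 1 ∧ z.2.2.1 + r 0 * z.2.2.2 = 0)),
    cnt_one ((0, 1, - (r 0 * (r 1 + r 2 - h 2 2)), r 1 + r 2 - h 2 2) : F × F × F × F)] at e
  · rw [cnt_congr (Q := _)]
    · exact eq_sub_of_add_eq' e |>.trans (by ring)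
    · intro z
      rw [tr_mkT_mul _ _ _ _ _ h12, n1, n3, ← and_assoc]
      refine and_congr_left fun _ => and_congr_right fun _ => ?_
      constructor
      · intro h; linear_combination h
      · intro h; linear_combination h
  · rintro ⟨E, G, B, D⟩
    simp only [Prod.mk.injEq, Kc, ga]
    constructor
    · rintro ⟨⟨h1, h2⟩, rfl, rfl, h3⟩
      refine ⟨rfl, rfl, ?_, ?_⟩
      · linear_combination h3 - r 0 * h2
      · linear_combination h2
    · rintro ⟨rfl, rfl, rfl, rfl⟩
      refine ⟨⟨?_, ?_⟩, rfl, rfl, ?_⟩ <;> ring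

open scoped Classical in
theorem fcRU_semi {r : Fin 3 → F} (hr : Good r) {h : M F} (hh : E12 h)
    (hs : h 2 1 = 0) (hd : h.det = r 0 * r 1 * r 2) :
    fc RU r h = Q F * (Q F - 1) * (1 + if h 2 2 = r 1 ∨ h 2 2 = r 2 then 1 else 0) := by
  rw [fc_eq (d := 1) hr.h0 (fun T hT => hT.1.2.2) hh (by rw [one_mul, hd])]
  rw [shapeRU hr.h0 (fun T => tr3 (T * h) = r 0 + r 1 + r 2)]
  have hdet := det_E12 hh
  rw [hs] at hdet
  have hx : h 0 1 ≠ 0 := by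
    intro h0
    rw [hdet, h0] at hd
    apply prod_ne hr
    rw [← hd]; ring
  have e1 := z_semi_En hr.h0 3 3 1
    (r 1 + r 2) (h 0 1) (h 0 2) (h 2 2) hx
  have e2 := z_semi_E0 hr.h0 3 3 1
    (r 1) (r 2) (h 0 1) (h 0 2) (h 2 2) one_ne_zero hr.h1 hr.h2 (by rw [← hd, hdet]; ring)
  have ga1 : ∀ G : F, ga 3 3 1 G = 0 ↔ G = 1 := by
    intro G
    have : ga 3 3 1 G = (1 - G) ^ 3 := by simp only [ga]; ring
    rw [this, pow_eq_zero_iff (by norm_num), sub_eq_zero, eq_comm]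
  -- the degenerate ones
  have e3 : cnt (fun z : F × F × F × F => (Kc (r 0) 3 3 1 z ∧
        Cf (r 0) 3 3 z * h 0 1 + z.1 * h 0 2 + z.2.1 * h 2 2 = r 1 + r 2) ∧ 
        (z.1 = 0 ∧ z.2.1 = 1 ∧ z.2.2.1 + r 0 * z.2.2.2 = 0)) =
        (if h 2 2 = r 1 ∨ h 2 2 = r 2 then 1 else 0) * Q F := by
    have hk := semi_key hr.h0 3 3 1 (r 1) (r 2) (h 0 1) (h 2 2) one_ne_zero hr.h1 hr.h2
      (by rw [← hd, hdet]; ring) 1 ((ga1 1).2 rfl)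
    simp only [mul_one] at hk
    rw [cnt_bij (Q := fun w : F => (h 2 2 = r 1 ∨ h 2 2 = r 2) ∧ True)
      (fun z => z.2.2.2) (fun w => (0, 1, - (r 0 * w), w)), cnt_prop_and, cnt_triv]
    · split_ifs <;> simp
    · rintro ⟨E, G, B, D⟩ ⟨⟨h1, h2⟩, h3, h4, h5⟩
      simp only at h3 h4
      subst h3 h4
      refine ⟨?_, trivial⟩
      rw [← hk]
      simp only [Cf] at h2
      simpa using h2
    · rintro w ⟨h1, -⟩
      rw [← hk] at h1
      refine ⟨⟨?_, ?_⟩, rfl, rfl, ?_⟩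
      · simp only [Kc, (ga1 1).2 rfl]; ring
      · simp only [Cf]; simpa using h1
      · ring
    · rintro ⟨E, G, B, D⟩ ⟨⟨h1, h2⟩, h3, h4, h5⟩
      simp only at h3 h4 h5
      subst h3 h4
      simp only [Prod.mk.injEq, true_and, and_true]
      linear_combination -h5
    · rintro w _; rfl
  have e4 : cnt (fun G : F => ga 3 3 1 G = 0 ∧ (h 2 2 * G = r 1 ∨ h 2 2 * G = r 2)) =
      if h 2 2 = r 1 ∨ h 2 2 = r 2 then 1 else 0 := by
    split_ifs with hc
    · refine cnt_one 1 fun G => ?_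
      rw [ga1]
      constructor
      · exact fun h => h.1
      · rintro rfl; simpa using hc
    · refine cnt_false fun G => ?_
      rw [ga1]
      rintro ⟨rfl, h2⟩
      exact hc (by simpa using h2)
  rw [e4] at e2
  have e5 := cnt_split (fun z : F × F × F × F => (Kc (r 0) 3 3 1 z ∧
        Cf (r 0) 3 3 z * h 0 1 + z.1 * h 0 2 + z.2.1 * h 2 2 = r 1 + r 2)) (fun z => z.1 = 0)
  have e6 := cnt_split (fun z : F × F × F × F => (Kc (r 0) 3 3 1 z ∧
        Cf (r 0) 3 3 z * h 0 1 + z.1 * h 0 2 + z.2.1 * h 2 2 = r 1 + r 2))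
        (fun z => (z.1 = 0 ∧ z.2.1 = 1 ∧ z.2.2.1 + r 0 * z.2.2.2 = 0))
  rw [e3] at e6
  rw [e2, e1] at e5
  rw [cnt_congr (Q := _)]
  · exact (eq_sub_of_add_eq' (e6.symm.trans e5)).trans (by split_ifs <;> ring)
  · intro z
    rw [tr_mkT_mul _ _ _ _ _ hh, hs, ← and_assoc]
    refine and_congr_left fun _ => and_congr_right fun _ => ?_
    constructor
    · intro h; linear_combination h
    · intro h; linear_combination h

end
end GL3Q

namespace GL3Q
set_option linter.unusedSectionVars false
set_option linter.unusedVariables false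
set_option linter.unusedSimpArgs false
open Matrix

section
variable {F : Type*} [Field F] [Fintype F]

def qh (h : M F) (u : F) : F := u * h 1 1 + h 2 1 - u ^ 2 * h 1 2 - u * h 2 2

open scoped Classical in
noncomputable def Lh (h : M F) : ℤ := cnt (fun u : F => qh h u ≠ 0) + if h 1 2 ≠ 0 then 1 else 0

theorem RU_Ev {T : M F} (hT : Ev 1 T) : RU T ↔ (T 1 1 + T 2 2 = 2 ∧ T 1 1 * T 2 2 - T 1 2 * T 2 1 = 1
    ∧ ¬ (T 0 1 * (T 1 1 - 1) + T 0 2 * T 2 1 = 0 ∧ T 0 1 * T 1 2 + T 0 2 * (T 2 2 - 1) = 0)) := by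
  obtain ⟨h1, h2, h3⟩ := hT
  constructor
  · rintro ⟨⟨e1, e2, e3⟩, hn⟩
    rw [Matrix.det_fin_three] at e3
    simp only [tr3, c23, h1, h2, h3] at e1 e2 e3
    have f1 : T 1 1 + T 2 2 = 2 := by linear_combination e1
    have f2 : T 1 1 * T 2 2 - T 1 2 * T 2 1 = 1 := by linear_combination e3
    refine ⟨f1, f2, ?_⟩
    rintro ⟨k1, k2⟩
    apply hn
    have f3 : T 2 2 = 2 - T 1 1 := by linear_combination f1
    rw [f3] at f2 k2
    ext i j
    rw [mul3]
    fin_cases i <;> fin_cases j <;> simp [h1, h2, h3, f3]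
    · exact k1
    · linear_combination k2
    · linear_combination -f2
    · ring
    · ring
    · linear_combination -f2
  · rintro ⟨f1, f2, hn⟩
    refine ⟨⟨?_, ?_, ?_⟩, ?_⟩
    · simp only [tr3, h1]; linear_combination f1
    · simp only [c23, h1, h2, h3]; linear_combination f1 + f2
    · rw [Matrix.det_fin_three, h1, h2, h3]; linear_combination f2
    · intro h0
      apply hn
      have k1 := congrFun (congrFun h0 0) 1
      have k2 := congrFun (congrFun h0 0) 2
      rw [mul3] at k1 k2
      simp [h1, h2, h3] at k1 k2
      exact ⟨k1, k2⟩

theorem Ev_mul_iff {l : F} (hl : l ≠ 0) {T h : M F} (hh : Ev l h) : Ev l (T * h) ↔ Ev 1 T := by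
  obtain ⟨h1, h2, h3⟩ := hh
  simp only [Ev, mul3, h1, h2, h3]
  simp [hl]

/-- count of unipotent matrices in the eigenvector case -/
theorem fcRU_eig_pre {r : Fin 3 → F} (hr : Good r) {h : M F} (hh : Ev (r 0) h)
    (hd : h.det = r 0 * r 1 * r 2) :
    fc RU r h = Q F * (Q F - 1) *
      (cnt (fun w : F × F => w.1 ≠ 0 ∧ w.1 * qh h w.2 = r 1 + r 2 - h 1 1 - h 2 2) +
       cnt (fun g : F => g ≠ 0 ∧ g * h 1 2 = r 1 + r 2 - h 1 1 - h 2 2)) := by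
  have e0 : fc RU r h = cnt (fun T : M F => Ev 1 T ∧ T 1 1 + T 2 2 = 2 ∧
      T 1 1 * T 2 2 - T 1 2 * T 2 1 = 1
      ∧ ¬ (T 0 1 * (T 1 1 - 1) + T 0 2 * T 2 1 = 0 ∧ T 0 1 * T 1 2 + T 0 2 * (T 2 2 - 1) = 0) ∧
      (T 1 1 - 1) * (h 1 1 - h 2 2) + T 1 2 * h 2 1 + T 2 1 * h 1 2 =
        r 1 + r 2 - h 1 1 - h 2 2) := by
    refine cnt_congr fun T => ?_
    rw [Ev_mul_iff hr.h0 hh]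
    constructor
    · rintro ⟨h1, h2, h3⟩
      have h4 := (RU_Ev h2).1 h1
      refine ⟨h2, h4.1, h4.2.1, h4.2.2, ?_⟩
      have h5 := h3.1
      obtain ⟨i1, i2, i3⟩ := hh
      obtain ⟨j1, j2, j3⟩ := h2
      simp only [tr3, mul3, i1, i2, i3, j1, j2, j3] at h5
      linear_combination h5 - h 2 2 * h4.1
    · rintro ⟨h2, h3, h4, h5, h6⟩
      have h7 := (RU_Ev h2).2 ⟨h3, h4, h5⟩
      refine ⟨h7, h2, ?_⟩
      rw [CR_of_Ev hr.h0 ((Ev_mul_iff hr.h0 hh).2 h2) (by rw [Matrix.det_mul, h7.1.2.2, hd, one_mul])]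
      obtain ⟨i1, i2, i3⟩ := hh
      obtain ⟨j1, j2, j3⟩ := h2
      simp only [tr3, mul3, i1, i2, i3, j1, j2, j3]
      linear_combination h6 + h 2 2 * h3
  rw [e0, cnt_split _ (fun T : M F => T 1 2 ≠ 0), mul_add]
  congr 1
  · rw [cnt_bij (Q := fun w : (F × F) × (F × F) =>
        (w.1.1 ≠ 0 ∧ w.1.1 * qh h w.1.2 = r 1 + r 2 - h 1 1 - h 2 2) ∧ (w.2.1 ≠ 0 ∧ True))
      (fun T => ((T 1 2, (T 1 1 - 1) / T 1 2), (T 0 1 - T 0 2 * ((T 1 1 - 1) / T 1 2), T 0 2)))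
      (fun w => !![1, w.2.1 + w.2.2 * w.1.2, w.2.2; 0, 1 + w.1.1 * w.1.2, w.1.1;
        0, - w.1.1 * w.1.2 ^ 2, 1 - w.1.1 * w.1.2])]
    · rw [cnt_prod (fun w : F × F => w.1 ≠ 0 ∧ w.1 * qh h w.2 = r 1 + r 2 - h 1 1 - h 2 2)
        (fun w : F × F => w.1 ≠ 0 ∧ True), cnt_T (fun x => x ≠ 0), cnt_nz]
      ring
    · rintro T ⟨⟨⟨j1, j2, j3⟩, h3, h4, h5, h6⟩, h7⟩
      have h8 : T 2 2 = 2 - T 1 1 := by linear_combination h3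
      rw [h8] at h4 h5
      have h9 : T 2 1 = - (T 1 1 - 1) ^ 2 / T 1 2 := by
        field_simp; linear_combination - h4
      refine ⟨⟨h7, ?_⟩, ?_, trivial⟩
      · rw [← h6, h9]; simp only [qh]; field_simp; ring
      · intro hc
        apply h5
        have : T 0 1 = T 0 2 * ((T 1 1 - 1) / T 1 2) := by linear_combination hc
        rw [this, h9]
        constructor <;> field_simp <;> ring
    · rintro ⟨⟨b, u⟩, ⟨x, y⟩⟩ ⟨⟨h1, h2⟩, h3, -⟩
      simp only [qh] at h1 h2 h3
      simp [Ev]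
      refine ⟨⟨?_, ?_, ?_, ?_⟩, h1⟩
      · ring
      · ring
      · intro k1 k2
        apply h3
        apply mul_left_cancel₀ h1
        linear_combination k2
      · linear_combination h2
    · rintro T ⟨⟨⟨j1, j2, j3⟩, h3, h4, h5, h6⟩, h7⟩
      have h8 : T 2 2 = 2 - T 1 1 := by linear_combination h3
      rw [h8] at h4 h5
      have h9 : T 2 1 = - (T 1 1 - 1) ^ 2 / T 1 2 := by
        field_simp; linear_combination - h4
      ext i j
      fin_cases i <;> fin_cases j <;> simp [j1, j2, j3]
      · field_simp; ring
      · rw [h9]; field_simp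
      · rw [h8]; field_simp; ring
    · rintro ⟨⟨b, u⟩, ⟨x, y⟩⟩ ⟨⟨h1, h2⟩, h3, -⟩
      simp only at h1
      simp [h1]
  · rw [cnt_bij (Q := fun w : F × (F × F) =>
        (w.1 ≠ 0 ∧ w.1 * h 1 2 = r 1 + r 2 - h 1 1 - h 2 2) ∧ (w.2.1 ≠ 0 ∧ True))
      (fun T => (T 2 1, (T 0 2, T 0 1)))
      (fun w => !![1, w.2.2, w.2.1; 0, 1, 0; 0, w.1, 1])]
    · rw [cnt_prod (fun w : F => w ≠ 0 ∧ w * h 1 2 = r 1 + r 2 - h 1 1 - h 2 2)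
        (fun w : F × F => w.1 ≠ 0 ∧ True), cnt_T (fun x => x ≠ 0), cnt_nz]
      ring
    · rintro T ⟨⟨⟨j1, j2, j3⟩, h3, h4, h5, h6⟩, h7⟩
      rw [not_not] at h7
      have h8 : T 2 2 = 2 - T 1 1 := by linear_combination h3
      rw [h8, h7] at h4
      have h9 : T 1 1 = 1 := by
        have : (T 1 1 - 1) ^ 2 = 0 := by linear_combination -h4
        have := pow_eq_zero_iff (two_ne_zero) |>.1 this
        linear_combination this
      rw [h8, h9, h7] at h5
      rw [h9, h7] at h6
      refine ⟨⟨?_, ?_⟩, ?_, trivial⟩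
      · intro k
        simp only at k
        apply h5; rw [k]; constructor <;> ring
      · linear_combination h6
      · intro k
        simp only at k
        apply h5; rw [k]; constructor <;> ring
    · rintro ⟨g, y, x⟩ ⟨⟨h1, h2⟩, h3, -⟩
      simp only at h1 h2 h3
      simp [Ev, h1, h2, h3]
      norm_num
    · rintro T ⟨⟨⟨j1, j2, j3⟩, h3, h4, h5, h6⟩, h7⟩
      rw [not_not] at h7
      have h8 : T 2 2 = 2 - T 1 1 := by linear_combination h3
      rw [h8, h7] at h4
      have h9 : T 1 1 = 1 := by
        have : (T 1 1 - 1) ^ 2 = 0 := by linear_combination -h4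
        have := pow_eq_zero_iff (two_ne_zero) |>.1 this
        linear_combination this
      rw [h9] at h8
      have h8 : T 2 2 = 1 := by rw [h8]; norm_num
      ext i j
      fin_cases i <;> fin_cases j <;> simp [j1, j2, j3, h7, h8, h9]
    · rintro ⟨g, y, x⟩ _
      simp

open scoped Classical in
theorem Lh_CR {r : Fin 3 → F} (hr : Good r) {h : M F} (hh : Ev (r 0) h) (hc : CR r h) :
    Lh h = Q F - 1 := by
  obtain ⟨i1, i2, i3⟩ := hh
  obtain ⟨c1, c2, c3⟩ := hc
  rw [Matrix.det_fin_three] at c3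
  simp only [tr3, i1, i2, i3] at c1 c3
  have ht : h 1 1 + h 2 2 = r 1 + r 2 := by linear_combination c1
  have hdd : h 1 1 * h 2 2 - h 1 2 * h 2 1 = r 1 * r 2 := by
    apply mul_left_cancel₀ hr.h0
    linear_combination c3
  have e := cnt_not (fun u : F => qh h u = 0)
  rw [Lh, show cnt (fun u : F => qh h u ≠ 0) = Q F - cnt (fun u => qh h u = 0) from e]
  by_cases h12 : h 1 2 = 0
  · rw [cnt_one (h 2 1 / (h 2 2 - h 1 1)), if_neg (by simpa using h12)]
    · ring
    · intro u
      have hne : h 2 2 - h 1 1 ≠ 0 := by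
        intro k
        have : (r 1 - r 2) ^ 2 = 0 := by
          rw [h12] at hdd
          linear_combination 4 * hdd + (h 2 2 - h 1 1) * k - (r 1 + r 2 + (h 1 1 + h 2 2)) * ht
        have := pow_eq_zero_iff (two_ne_zero) |>.1 this
        exact hr.h12 (by linear_combination this)
      rw [eq_div_iff hne, qh, h12]
      constructor
      · intro k; linear_combination -k
      · intro k; linear_combination -k
  · rw [cnt_two ((r 1 - h 2 2) / h 1 2) ((r 2 - h 2 2) / h 1 2), if_pos h12]
    · ring
    · intro k
      rw [div_left_inj' h12] at k
      exact hr.h12 (by linear_combination k)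
    · intro u
      rw [eq_div_iff h12, eq_div_iff h12]
      rw [← sub_eq_zero (a := u * h 1 2), ← sub_eq_zero (a := u * h 1 2) (b := r 2 - h 2 2),
        ← mul_eq_zero]
      have : (u * h 1 2 - (r 1 - h 2 2)) * (u * h 1 2 - (r 2 - h 2 2)) = - h 1 2 * qh h u := by
        simp only [qh]
        linear_combination (u * h 1 2 + h 2 2) * ht - hdd
      rw [this]
      simp [h12]

open scoped Classical in
theorem fcRU_eig {r : Fin 3 → F} (hr : Good r) {h : M F} (hh : Ev (r 0) h)
    (hd : h.det = r 0 * r 1 * r 2) :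
    fc RU r h = Q F * (Q F - 1) * (Lh h + (Q F - 1) * if CR r h then 1 else 0) := by
  rw [fcRU_eig_pre hr hh hd]
  congr 1
  have hcr := CR_of_Ev hr.h0 hh hd
  have htau : CR r h ↔ r 1 + r 2 - h 1 1 - h 2 2 = 0 := by
    rw [hcr, tr3, hh.1]
    constructor
    · intro k; linear_combination -k
    · intro k; linear_combination -k
  by_cases hc : CR r h
  · rw [if_pos hc, Lh_CR hr hh hc]
    have hL := Lh_CR hr hh hc
    rw [htau.1 hc]
    have e1 : cnt (fun w : F × F => w.1 ≠ 0 ∧ w.1 * qh h w.2 = 0) =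
        (Q F - 1) * (Q F - cnt (fun u => qh h u ≠ 0)) := by
      have := cnt_not (fun u : F => qh h u ≠ 0)
      rw [cnt_congr (Q := fun w : F × F => w.1 ≠ 0 ∧ ¬ (qh h w.2 ≠ 0)),
        cnt_p2 (fun x => x ≠ 0) (fun u => ¬ (qh h u ≠ 0)), cnt_nz, this]
      · rfl
      · intro w
        simp only [mul_eq_zero]
        tauto
    rw [e1]
    rw [Lh] at hL
    by_cases h12 : h 1 2 = 0
    · rw [if_neg (by simpa using h12)] at hL
      have e2 : cnt (fun g : F => g ≠ 0 ∧ g * h 1 2 = 0) = Q F - 1 := by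
        rw [← cnt_nz]; exact cnt_congr (by intro g; simp [h12])
      rw [e2]
      linear_combination - (Q F - 1) * hL
    · rw [if_pos h12] at hL
      have e2 : cnt (fun g : F => g ≠ 0 ∧ g * h 1 2 = 0) = 0 :=
        cnt_false (by intro x; simp [h12])
      rw [e2]
      linear_combination - (Q F - 1) * hL
  · rw [if_neg hc, mul_zero, add_zero, Lh]
    rw [htau] at hc
    generalize r 1 + r 2 - h 1 1 - h 2 2 = τ at *
    congr 1
    · refine cnt_bij (fun w => w.2) (fun u => (τ / qh h u, u)) ?_ ?_ ?_ ?_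
      · rintro ⟨b, u⟩ ⟨h1, h2⟩ h3
        simp only at h1 h2 h3
        rw [h3, mul_zero] at h2
        exact hc h2.symm
      · intro u hu
        exact ⟨div_ne_zero hc hu, by field_simp⟩
      · rintro ⟨b, u⟩ ⟨h1, h2⟩
        simp only at h1 h2 ⊢
        rw [← h2]
        have : qh h u ≠ 0 := by
          intro h3
          rw [h3, mul_zero] at h2
          exact hc h2.symm
        simp only [Prod.mk.injEq, and_true]
        field_simp
      · intro u _; rfl
    · by_cases h12 : h 1 2 = 0
      · rw [if_neg (by simpa using h12)]
        refine cnt_false ?_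
        rintro x ⟨h1, h2⟩
        rw [h12, mul_zero] at h2
        exact hc h2.symm
      · rw [if_pos h12]
        refine cnt_one (τ / h 1 2) fun x => ?_
        rw [eq_div_iff h12]
        constructor
        · exact fun h => h.2
        · intro h
          refine ⟨?_, h⟩
          rintro rfl
          rw [zero_mul] at h
          exact hc h.symm

end
end GL3Q

namespace GL3Q
set_option linter.unusedSectionVars false
set_option linter.unusedVariables false
set_option linter.unusedSimpArgs false
open Matrix

section
variable {F : Type*} [Field F] [Fintype F]

theorem sh_tot {b : Fin 3 → F} (hb : Good b) {l : F} (hl : l ≠ 0) :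
    cnt (fun T : M F => CR b T ∧ Sh l T) = Q F ^ 2 * (Q F + 2) := by
  have := shape hl (b 0 + b 1 + b 2) (b 0 * b 1 + b 0 * b 2 + b 1 * b 2) (b 0 * b 1 * b 2)
    (fun _ => True)
  simp only [and_true] at this
  unfold CR
  rw [this, z_all hl, Rt_CR hb]; ring

theorem sh_E0 {b : Fin 3 → F} (hb : Good b) {l : F} (hl : l ≠ 0) :
    cnt (fun T : M F => CR b T ∧ Sh l T ∧ T 2 0 = 0) = 3 * Q F ^ 2 := by
  unfold CR
  rw [shape hl _ _ _ (fun T => T 2 0 = 0), ← Rt_CR hb, ← z_E0 l]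
  exact cnt_congr fun z => by simp [mkT]

theorem sh_GkE {b : Fin 3 → F} (hb : Good b) {l : F} (hl : l ≠ 0) (k : F) :
    cnt (fun T : M F => CR b T ∧ Sh l T ∧ T 2 2 = k * T 2 0) = Q F * (Q F - 1) := by
  unfold CR
  rw [shape hl _ _ _ (fun T => T 2 2 = k * T 2 0), mul_comm (Q F), ← z_GkE hl (b 0 + b 1 + b 2) (b 0 * b 1 + b 0 * b 2 + b 1 * b 2) _ k (prod_ne hb)]
  exact cnt_congr fun z => by simp [mkT]

theorem sh_C0 {b : Fin 3 → F} (hb : Good b) {l : F} (hl : l ≠ 0) :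
    cnt (fun T : M F => CR b T ∧ Sh l T ∧ T 1 0 = 0) = Q F * (Q F - 1) := by
  unfold CR
  rw [shape hl _ _ _ (fun T => T 1 0 = 0), mul_comm (Q F), ← z_C0 hl (b 0 + b 1 + b 2) (b 0 * b 1 + b 0 * b 2 + b 1 * b 2) _ (prod_ne hb)]
  exact cnt_congr fun z => by simp [mkT]

theorem sh_DkC {b : Fin 3 → F} (hb : Good b) {l : F} (hl : l ≠ 0) (k : F) :
    cnt (fun T : M F => CR b T ∧ Sh l T ∧ T 1 2 = k * T 1 0) = Q F ^ 2 + Q F + 1 := by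
  unfold CR
  rw [shape hl _ _ _ (fun T => T 1 2 = k * T 1 0)]
  have := z_DkC hl (b 0 + b 1 + b 2) (b 0 * b 1 + b 0 * b 2 + b 1 * b 2) _ k (prod_ne hb)
  rw [Rt_CR hb] at this
  rw [show Q F ^ 2 + Q F + 1 = 3 * Q F + (Q F - 1) ^ 2 by ring, ← this]
  exact cnt_congr fun z => by simp [mkT]

theorem Pc_submatrix (σ : Equiv.Perm (Fin 3)) (g1 g2 g3 : F) (S : M F) :
    Pc g1 g2 g3 (S.submatrix σ σ) ↔ Pc g1 g2 g3 S := by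
  have h : (S.submatrix σ σ).charpoly = S.charpoly := by
    have := Matrix.charpoly_reindex σ.symm S
    simpa [Matrix.reindex_apply] using this
  have ht : (S.submatrix σ σ).trace = S.trace := by
    simp only [Matrix.trace, Matrix.diag_apply, Matrix.submatrix_apply]
    exact Equiv.sum_comp σ (fun i => S i i)
  rw [Pc, Pc, tr3_eq, tr3_eq, c23_coeff, c23_coeff, h, ht, Matrix.det_submatrix_equiv_self]

theorem perm_cnt (σ : Equiv.Perm (Fin 3)) (b : Fin 3 → F) (X : M F → Prop) :
    cnt (fun S : M F => CR b S ∧ X (S.submatrix σ σ)) = cnt (fun S : M F => CR b S ∧ X S) := by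
  rw [← cnt_equiv (Matrix.reindex σ.symm σ.symm) (fun S : M F => CR b S ∧ X S)]
  refine cnt_congr fun S => ?_
  simp only [Matrix.reindex_apply, Equiv.symm_symm]
  rw [CR, CR, Pc_submatrix]

def s01 : Equiv.Perm (Fin 3) := Equiv.swap 0 1
def s12 : Equiv.Perm (Fin 3) := Equiv.swap 1 2
def cy : Equiv.Perm (Fin 3) := ⟨![2, 0, 1], ![1, 2, 0], by decide, by decide⟩
@[simp] theorem s01_0 : s01 0 = 1 := by decide
@[simp] theorem s01_1 : s01 1 = 0 := by decide
@[simp] theorem s01_2 : s01 2 = 2 := by decide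
@[simp] theorem s12_0 : s12 0 = 0 := by decide
@[simp] theorem s12_1 : s12 1 = 2 := by decide
@[simp] theorem s12_2 : s12 2 = 1 := by decide
@[simp] theorem cy_0 : cy 0 = 2 := by decide
@[simp] theorem cy_1 : cy 1 = 0 := by decide
@[simp] theorem cy_2 : cy 2 = 1 := by decide

/-- first column is `e₃` -/
def E13 (S : M F) : Prop := S 0 0 = 0 ∧ S 1 0 = 0 ∧ S 2 0 = 1
/-- third column is `l e₁` -/
def E31 (l : F) (S : M F) : Prop := S 0 2 = l ∧ S 1 2 = 0 ∧ S 2 2 = 0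

theorem c12_tot {b : Fin 3 → F} (hb : Good b) :
    cnt (fun T : M F => CR b T ∧ E12 T) = Q F ^ 2 * (Q F + 2) := by
  rw [← sh_tot hb one_ne_zero, ← perm_cnt s01 _ (Sh 1)]
  exact cnt_congr fun S => by simp [Sh, E12]; tauto

theorem c12_0 {b : Fin 3 → F} (hb : Good b) :
    cnt (fun T : M F => CR b T ∧ E12 T ∧ T 2 1 = 0) = 3 * Q F ^ 2 := by
  rw [← sh_E0 hb one_ne_zero, ← perm_cnt s01 _ (fun T => Sh 1 T ∧ T 2 0 = 0)]
  exact cnt_congr fun S => by simp [Sh, E12]; tauto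

theorem c13_tot {b : Fin 3 → F} (hb : Good b) :
    cnt (fun T : M F => CR b T ∧ E13 T) = Q F ^ 2 * (Q F + 2) := by
  rw [← sh_tot hb one_ne_zero, ← perm_cnt cy _ (Sh 1)]
  exact cnt_congr fun S => by simp [Sh, E13]; tauto

theorem c13_0 {b : Fin 3 → F} (hb : Good b) :
    cnt (fun T : M F => CR b T ∧ E13 T ∧ T 1 1 = 0) = Q F * (Q F - 1) := by
  rw [← sh_GkE hb one_ne_zero 0, ← perm_cnt cy _ (fun T => Sh 1 T ∧ T 2 2 = 0 * T 2 0)]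
  exact cnt_congr fun S => by simp [Sh, E13]; tauto

theorem c31_tot {b : Fin 3 → F} (hb : Good b) {l : F} (hl : l ≠ 0) :
    cnt (fun T : M F => CR b T ∧ E31 l T) = Q F ^ 2 * (Q F + 2) := by
  rw [← sh_tot hb hl, ← perm_cnt s12 _ (Sh l)]
  exact cnt_congr fun S => by simp [Sh, E31]; tauto

theorem c31_0 {b : Fin 3 → F} (hb : Good b) {l : F} (hl : l ≠ 0) :
    cnt (fun T : M F => CR b T ∧ E31 l T ∧ T 2 0 = 0) = Q F * (Q F - 1) := by
  rw [← sh_C0 hb hl, ← perm_cnt s12 _ (fun T => Sh l T ∧ T 1 0 = 0)]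
  exact cnt_congr fun S => by simp [Sh, E31]; tauto

theorem c31_k {b : Fin 3 → F} (hb : Good b) {l : F} (hl : l ≠ 0) (k : F) :
    cnt (fun T : M F => CR b T ∧ E31 l T ∧ T 2 1 = k * T 2 0) = Q F ^ 2 + Q F + 1 := by
  rw [← sh_DkC hb hl k, ← perm_cnt s12 _ (fun T => Sh l T ∧ T 1 2 = k * T 1 0)]
  exact cnt_congr fun S => by simp [Sh, E31]; tauto

/-- the eigenvector case: conditions on the 2x2 block -/
theorem CR_Ev {b : Fin 3 → F} (hb : Good b) {S : M F} (hS : Ev (b 0) S) :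
    CR b S ↔ S 1 1 + S 2 2 = b 1 + b 2 ∧ S 1 1 * S 2 2 - S 1 2 * S 2 1 = b 1 * b 2 := by
  obtain ⟨h1, h2, h3⟩ := hS
  rw [CR, Pc, Matrix.det_fin_three]
  simp only [tr3, c23, h1, h2, h3]
  constructor
  · rintro ⟨e1, e2, e3⟩
    refine ⟨by linear_combination e1, ?_⟩
    apply mul_left_cancel₀ hb.h0
    linear_combination e3
  · rintro ⟨e1, e2⟩
    refine ⟨by linear_combination e1, by linear_combination b 0 * e1 + e2, by linear_combination b 0 * e2⟩

/-- eigenvector matrices by parameters (first row, block p r s t) -/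
theorem ev_param {b : Fin 3 → F} (hb : Good b) (X : M F → Prop) :
    cnt (fun S : M F => CR b S ∧ Ev (b 0) S ∧ X S) =
    cnt (fun z : (F × F) × (F × F × F × F) => X !![b 0, z.1.1, z.1.2; 0, z.2.1, z.2.2.1; 0, z.2.2.2.1, z.2.2.2.2] ∧
      z.2.1 + z.2.2.2.2 = b 1 + b 2 ∧ z.2.1 * z.2.2.2.2 - z.2.2.1 * z.2.2.2.1 = b 1 * b 2) := by
  have key : ∀ S : M F, Ev (b 0) S → !![b 0, S 0 1, S 0 2; 0, S 1 1, S 1 2; 0, S 2 1, S 2 2] = S := by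
    rintro S ⟨h1, h2, h3⟩
    ext i j
    fin_cases i <;> fin_cases j <;> simp [h1, h2, h3]
  refine cnt_bij (fun S => ((S 0 1, S 0 2), (S 1 1, S 1 2, S 2 1, S 2 2)))
    (fun z => !![b 0, z.1.1, z.1.2; 0, z.2.1, z.2.2.1; 0, z.2.2.2.1, z.2.2.2.2]) ?_ ?_ ?_ ?_
  · rintro S ⟨h, he, hx⟩
    rw [CR_Ev hb he] at h
    refine ⟨?_, h⟩
    simp only
    rwa [key S he]
  · rintro ⟨⟨x, y⟩, p, r, s, t⟩ ⟨hx, h⟩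
    have he : Ev (b 0) !![b 0, x, y; 0, p, r; 0, s, t] := by simp [Ev]
    refine ⟨?_, he, hx⟩
    simp only
    rw [CR_Ev hb he]
    simpa using h
  · rintro S ⟨h, he, hx⟩
    exact key S he
  · rintro ⟨⟨x, y⟩, p, r, s, t⟩ _
    simp

theorem cnt_F2 (P : F × F × F × F → Prop) :
    cnt (fun z : (F × F) × (F × F × F × F) => P z.2) = Q F ^ 2 * cnt P := by
  have := cnt_prod (fun _ : F × F => True) P
  simp only [true_and] at this
  rw [this, cnt_true, Fintype.card_prod, Q]; push_cast; ring

theorem ev_0 {b : Fin 3 → F} (hb : Good b) :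
    cnt (fun S : M F => CR b S ∧ Ev (b 0) S ∧ S 2 1 = 0) = 2 * Q F ^ 3 := by
  rw [ev_param hb (fun S => S 2 1 = 0)]
  simp only [Matrix.of_apply, Matrix.cons_val]
  rw [cnt_F2 (fun z => z.2.2.1 = 0 ∧ z.1 + z.2.2.2 = b 1 + b 2 ∧
    z.1 * z.2.2.2 - z.2.1 * z.2.2.1 = b 1 * b 2)]
  rw [cnt_bij (Q := fun w : F × F => (w.1 = b 1 ∨ w.1 = b 2) ∧ True)
    (fun z => (z.1, z.2.1)) (fun w => (w.1, w.2, 0, b 1 + b 2 - w.1))]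
  · rw [cnt_T (fun x => x = b 1 ∨ x = b 2), cnt_two (b 1) (b 2) hb.h12 (fun _ => Iff.rfl)]; ring
  · rintro ⟨p, r, s, t⟩ ⟨h1, h2, h3⟩
    simp only at h1 h2 h3 ⊢
    refine ⟨?_, trivial⟩
    rw [← sub_eq_zero, ← sub_eq_zero (b := b 2), ← mul_eq_zero]
    rw [h1] at h3
    linear_combination p * h2 - h3
  · rintro ⟨p, r⟩ ⟨h, _⟩
    simp only at h ⊢
    rcases h with rfl | rfl
    · refine ⟨trivial, by ring, by ring⟩
    · refine ⟨trivial, by ring, by ring⟩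
  · rintro ⟨p, r, s, t⟩ ⟨h1, h2, h3⟩
    simp only at h1 h2 h3 ⊢
    rw [h1, ← h2]; simp
  · rintro ⟨p, r⟩ _; rfl

theorem ev_k {b : Fin 3 → F} (hb : Good b) (k : F) :
    cnt (fun S : M F => CR b S ∧ Ev (b 0) S ∧ S 2 2 = k * S 2 1) = Q F ^ 2 * (Q F - 1) := by
  rw [ev_param hb (fun S => S 2 2 = k * S 2 1)]
  simp only [Matrix.of_apply, Matrix.cons_val]
  rw [cnt_F2 (fun z => z.2.2.2 = k * z.2.2.1 ∧ z.1 + z.2.2.2 = b 1 + b 2 ∧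
    z.1 * z.2.2.2 - z.2.1 * z.2.2.1 = b 1 * b 2)]
  rw [cnt_bij (Q := fun s : F => s ≠ 0)
    (fun z => z.2.2.1) (fun s => (b 1 + b 2 - k * s, ((b 1 + b 2 - k * s) * (k * s) - b 1 * b 2) / s, s, k * s))]
  · rw [cnt_nz]
  · rintro ⟨p, r, s, t⟩ ⟨h1, h2, h3⟩ h4
    simp only at h1 h2 h3 h4
    rw [h1, h4] at h3
    exact mul_ne_zero hb.h1 hb.h2 (by linear_combination -h3)
  · rintro s hs
    simp only
    refine ⟨trivial, by ring, ?_⟩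
    field_simp; ring
  · rintro ⟨p, r, s, t⟩ ⟨h1, h2, h3⟩
    simp only at h1 h2 h3 ⊢
    have h4 : s ≠ 0 := by
      intro h4
      rw [h1, h4] at h3
      exact mul_ne_zero hb.h1 hb.h2 (by linear_combination -h3)
    have e1 : b 1 + b 2 - k * s = p := by rw [← h1, ← h2]; ring
    rw [e1, ← h1, ← h3]
    simp only [Prod.mk.injEq, true_and, and_true]
    field_simp; ring
  · rintro s _; rfl

theorem ev_tot {b : Fin 3 → F} (hb : Good b) :
    cnt (fun S : M F => CR b S ∧ Ev (b 0) S) = Q F ^ 3 * (Q F + 1) := by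
  rw [cnt_split _ (fun S : M F => S 2 1 = 0)]
  have e := ev_0 hb
  simp only [and_assoc]
  rw [e, ev_param hb (fun S => ¬ (S 2 1 = 0))]
  simp only [Matrix.of_apply, Matrix.cons_val]
  rw [cnt_F2 (fun z => ¬ (z.2.2.1 = 0) ∧ z.1 + z.2.2.2 = b 1 + b 2 ∧
    z.1 * z.2.2.2 - z.2.1 * z.2.2.1 = b 1 * b 2)]
  rw [cnt_bij (Q := fun w : F × F => w.1 ≠ 0 ∧ True)
    (fun z => (z.2.2.1, z.2.2.2)) (fun w => (b 1 + b 2 - w.2, ((b 1 + b 2 - w.2) * w.2 - b 1 * b 2) / w.1, w.1, w.2))]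
  · rw [cnt_T (fun x => x ≠ 0), cnt_nz]; ring
  · rintro ⟨p, r, s, t⟩ ⟨h1, h2, h3⟩
    exact ⟨h1, trivial⟩
  · rintro ⟨s, t⟩ ⟨hs, _⟩
    simp only at hs ⊢
    refine ⟨hs, by ring, ?_⟩
    field_simp; ring
  · rintro ⟨p, r, s, t⟩ ⟨h1, h2, h3⟩
    simp only at h1 h2 h3 ⊢
    have e1 : b 1 + b 2 - t = p := by rw [← h2]; ring
    rw [e1, ← h3]
    simp only [Prod.mk.injEq, true_and, and_true]
    field_simp; ring
  · rintro ⟨s, t⟩ _; rfl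

/-- a root together with the eigenvector condition forces an eigenvalue -/
theorem Ev_root {b : Fin 3 → F} {l : F} {S : M F} (h : CR b S) (he : Ev l S) : ∃ j, l = b j := by
  obtain ⟨h1, h2, h3⟩ := he
  obtain ⟨e1, e2, e3⟩ := h
  rw [Matrix.det_fin_three] at e3
  simp only [tr3, c23, h1, h2, h3] at e1 e2 e3
  have : ga (b 0 + b 1 + b 2) (b 0 * b 1 + b 0 * b 2 + b 1 * b 2) (b 0 * b 1 * b 2) l = 0 := by
    rw [← e1, ← e2, ← e3]; simp only [ga]; ring
  rcases (ga_roots b l).1 this with h | h | h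
  · exact ⟨0, h⟩
  · exact ⟨1, h⟩
  · exact ⟨2, h⟩

/-- renumbering the roots so that the `j`-th comes first -/
theorem perm_root {b : Fin 3 → F} (hb : Good b) (j : Fin 3) :
    ∃ b' : Fin 3 → F, Good b' ∧ b' 0 = b j ∧ ∀ S : M F, CR b S ↔ CR b' S := by
  obtain ⟨h01, h02, h12, h0, h1, h2⟩ := hb
  fin_cases j
  · exact ⟨b, ⟨h01, h02, h12, h0, h1, h2⟩, rfl, fun S => Iff.rfl⟩
  · refine ⟨![b 1, b 0, b 2], ⟨h01.symm, h12, h02, h1, h0, h2⟩, rfl, fun S => ?_⟩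
    simp only [CR, Matrix.cons_val]
    ring_nf
  · refine ⟨![b 2, b 0, b 1], ⟨h02.symm, h12.symm, h01, h2, h0, h1⟩, rfl, fun S => ?_⟩
    simp only [CR, Matrix.cons_val]
    ring_nf

theorem evj_tot {b : Fin 3 → F} (hb : Good b) (j : Fin 3) :
    cnt (fun S : M F => CR b S ∧ Ev (b j) S) = Q F ^ 3 * (Q F + 1) := by
  obtain ⟨b', hb', h0, h⟩ := perm_root hb j
  rw [← ev_tot hb', h0]
  exact cnt_congr fun S => by rw [h]

theorem evj_0 {b : Fin 3 → F} (hb : Good b) (j : Fin 3) :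
    cnt (fun S : M F => CR b S ∧ Ev (b j) S ∧ S 2 1 = 0) = 2 * Q F ^ 3 := by
  obtain ⟨b', hb', h0, h⟩ := perm_root hb j
  rw [← ev_0 hb', h0]
  exact cnt_congr fun S => by rw [h]

theorem evj_k {b : Fin 3 → F} (hb : Good b) (j : Fin 3) (k : F) :
    cnt (fun S : M F => CR b S ∧ Ev (b j) S ∧ S 2 2 = k * S 2 1) = Q F ^ 2 * (Q F - 1) := by
  obtain ⟨b', hb', h0, h⟩ := perm_root hb j
  rw [← ev_k hb' k, h0]
  exact cnt_congr fun S => by rw [h]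

end
end GL3Q

namespace GL3Q
set_option linter.unusedSectionVars false
set_option linter.unusedVariables false
set_option linter.unusedSimpArgs false
open Matrix

section
variable {F : Type*} [Field F] [Fintype F]

def np (w : F × F × F) : Prop := ¬ (w.2.1 = 0 ∧ w.2.2 = 0)
def col (S : M F) : F × F × F := (S 0 0, S 1 0, S 2 0)
/-- the first basis vector is an eigenvector -/
def Par (S : M F) : Prop := S 1 0 = 0 ∧ S 2 0 = 0

theorem np_col (S : M F) : np (col S) ↔ ¬ Par S := Iff.rfl

theorem cnt_np : cnt (fun w : F × F × F => np w) = Q F ^ 3 - Q F := by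
  have h := cnt_not (fun w : F × F × F => w.2.1 = 0 ∧ w.2.2 = 0)
  have h2 := cnt_p3 (fun _ : F => True) (fun x => x = 0) (fun x => x = 0)
  simp only [true_and] at h2
  rw [h2, cnt_triv, cnt_eq] at h
  unfold np
  rw [h, Fintype.card_prod, Fintype.card_prod, Q]
  push_cast; ring

theorem np_fib {α : Type*} [Fintype α] (P : α → Prop) (f : α → F × F × F) (c : ℤ)
    (h : ∀ w, np w → cnt (fun x => P x ∧ f x = w) = c) :
    cnt (fun x => P x ∧ np (f x)) = (Q F ^ 3 - Q F) * c := by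
  rw [mul_comm, ← cnt_np]
  refine cnt_map _ f _ c (fun x hx => hx.2) fun w hw => ?_
  rw [← h w hw]
  refine cnt_congr fun x => ?_
  constructor
  · rintro ⟨⟨h1, h2⟩, h3⟩; exact ⟨h1, h3⟩
  · rintro ⟨h1, h3⟩; exact ⟨⟨h1, by rw [h3]; exact hw⟩, h3⟩

theorem conj_prod {x y : M F} (hxy : x * y = 1) (S T : M F) :
    y * (S * T) * x = (y * S * x) * (y * T * x) := by
  calc y * (S * T) * x = y * S * 1 * T * x := by simp only [mul_assoc, one_mul]
    _ = _ := by rw [← hxy]; simp only [mul_assoc]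

theorem one_conj {x y : M F} (hyx : y * x = 1) (hxy : x * y = 1) (b : Fin 3 → F)
    {X Y : M F → Prop} (h : ∀ S, X S ↔ Y (y * S * x)) :
    cnt (fun S : M F => CR b S ∧ X S) = cnt (fun S : M F => CR b S ∧ Y S) := by
  rw [← cnt_equiv (conjE y x hxy hyx) (fun S : M F => CR b S ∧ Y S)]
  refine cnt_congr fun S => ?_
  show _ ↔ CR b (y * S * x) ∧ Y (y * S * x)
  rw [CR_conj hxy, h]

theorem two_conj {x y : M F} (hyx : y * x = 1) (hxy : x * y = 1) (b c : Fin 3 → F)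
    {X Y : M F → M F → Prop} (h : ∀ S T, X S T ↔ Y (y * S * x) (y * T * x)) :
    cnt (fun p : M F × M F => CR b p.1 ∧ CR c p.2 ∧ X p.1 p.2) =
    cnt (fun p : M F × M F => CR b p.1 ∧ CR c p.2 ∧ Y p.1 p.2) := by
  rw [← cnt_equiv (Equiv.prodCongr (conjE y x hxy hyx) (conjE y x hxy hyx))
    (fun p : M F × M F => CR b p.1 ∧ CR c p.2 ∧ Y p.1 p.2)]
  refine cnt_congr fun p => ?_
  show _ ↔ CR b (y * p.1 * x) ∧ CR c (y * p.2 * x) ∧ Y (y * p.1 * x) (y * p.2 * x)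
  rw [CR_conj hxy, CR_conj hxy, h]

theorem three_conj {x y : M F} (hyx : y * x = 1) (hxy : x * y = 1) (b c : Fin 3 → F)
    {X Y : M F → M F → M F → Prop} (h : ∀ R S T, X R S T ↔ Y (y * R * x) (y * S * x) (y * T * x)) :
    cnt (fun p : (M F × M F) × M F => RU p.2 ∧ CR b p.1.1 ∧ CR c p.1.2 ∧ X p.2 p.1.1 p.1.2) =
    cnt (fun p : (M F × M F) × M F => RU p.2 ∧ CR b p.1.1 ∧ CR c p.1.2 ∧ Y p.2 p.1.1 p.1.2) := by
  rw [← cnt_equiv (Equiv.prodCongr (Equiv.prodCongr (conjE y x hxy hyx) (conjE y x hxy hyx))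
    (conjE y x hxy hyx))
    (fun p : (M F × M F) × M F => RU p.2 ∧ CR b p.1.1 ∧ CR c p.1.2 ∧ Y p.2 p.1.1 p.1.2)]
  refine cnt_congr fun p => ?_
  show _ ↔ RU (y * p.2 * x) ∧ CR b (y * p.1.1 * x) ∧ CR c (y * p.1.2 * x) ∧ Y (y * p.2 * x) (y * p.1.1 * x) (y * p.1.2 * x)
  rw [CR_conj hxy, CR_conj hxy, RU_conj hxy hyx, h]

theorem col_iff (S : M F) (w : F × F × F) : col S = w ↔ S *ᵥ Pi.single 0 1 = ![w.1, w.2.1, w.2.2] := by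
  obtain ⟨a, b, c⟩ := w
  rw [Matrix.mulVec_single_one]
  constructor
  · intro h
    simp only [col, Prod.mk.injEq] at h
    funext i
    fin_cases i <;> simp [h]
  · intro h
    have h0 := congrFun h 0
    have h1 := congrFun h 1
    have h2 := congrFun h 2
    simp at h0 h1 h2
    simp [col, h0, h1, h2]

theorem conj_vec {x y : M F} (hyx : y * x = 1) (hxy : x * y = 1) (S : M F) (u v : Fin 3 → F) :
    (y * S * x) *ᵥ u = v ↔ S *ᵥ (x *ᵥ u) = x *ᵥ v := by
  rw [← Matrix.mulVec_mulVec, ← Matrix.mulVec_mulVec]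
  constructor
  · intro h; rw [← h, Matrix.mulVec_mulVec _ x y, hxy, Matrix.one_mulVec]
  · intro h; rw [h, Matrix.mulVec_mulVec, hyx, Matrix.one_mulVec]

theorem E12_col (S : M F) : E12 S ↔ col S = (0, 1, 0) := by
  simp [E12, col]

theorem E13_col (S : M F) : E13 S ↔ col S = (0, 0, 1) := by
  simp [E13, col]

theorem Ev_col (l : F) (S : M F) : Ev l S ↔ col S = (l, 0, 0) := by
  simp [Ev, col]

/-- move a column vector -/
theorem col_conj {x y : M F} (hyx : y * x = 1) (hxy : x * y = 1) (hx : Ev 1 x)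
    {w v : F × F × F} (hw : x *ᵥ ![v.1, v.2.1, v.2.2] = ![w.1, w.2.1, w.2.2]) (S : M F) :
    col S = w ↔ col (y * S * x) = v := by
  rw [col_iff, col_iff, conj_vec hyx hxy, hw]
  rw [Ev_col, col_iff] at hx
  rw [hx]
  have : (![1, 0, 0] : Fin 3 → F) = Pi.single 0 1 := by
    funext i; fin_cases i <;> simp
  simp only [this]

theorem Ev_inv {x y : M F} (hyx : y * x = 1) (hx : Ev 1 x) : Ev 1 y := by
  have h0 := congrFun (congrFun hyx 0) 0
  have h1 := congrFun (congrFun hyx 1) 0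
  have h2 := congrFun (congrFun hyx 2) 0
  rw [mul3] at h0 h1 h2
  obtain ⟨x0, x1, x2⟩ := hx
  simp [x0, x1, x2] at h0 h1 h2
  exact ⟨h0, h1, h2⟩

theorem exists_inv {x : M F} (h : x.det ≠ 0) : ∃ y : M F, y * x = 1 ∧ x * y = 1 :=
  ⟨x⁻¹, Matrix.nonsing_inv_mul _ (isUnit_iff_ne_zero.2 h),
    Matrix.mul_nonsing_inv _ (isUnit_iff_ne_zero.2 h)⟩

/-- bring a non-parallel column to `e₂` -/
theorem nf12 {w : F × F × F} (hw : np w) : ∃ x y : M F, y * x = 1 ∧ x * y = 1 ∧ Ev 1 x ∧ Ev 1 y ∧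
    ∀ S : M F, col S = w ↔ E12 (y * S * x) := by
  obtain ⟨w0, w1, w2⟩ := w
  have key : ∃ x : M F, x.det ≠ 0 ∧ Ev 1 x ∧ x *ᵥ ![0, 1, 0] = ![w0, w1, w2] := by
    by_cases h2 : w2 = 0
    · refine ⟨!![1, w0, 0; 0, w1, 0; 0, 0, 1], ?_, by simp [Ev], ?_⟩
      · rw [Matrix.det_fin_three]
        have : w1 ≠ 0 := fun h => hw ⟨h, h2⟩
        simpa using this
      · funext i; fin_cases i <;> simp [Matrix.mulVec, dotProduct, Fin.sum_univ_three, h2]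
    · refine ⟨!![1, w0, 0; 0, w1, 1; 0, w2, 0], ?_, by simp [Ev], ?_⟩
      · rw [Matrix.det_fin_three]; simpa using h2
      · funext i; fin_cases i <;> simp [Matrix.mulVec, dotProduct, Fin.sum_univ_three]
  obtain ⟨x, hd, hx, hv⟩ := key
  obtain ⟨y, hyx, hxy⟩ := exists_inv hd
  refine ⟨x, y, hyx, hxy, hx, Ev_inv hyx hx, fun S => ?_⟩
  rw [E12_col]
  exact col_conj hyx hxy hx (v := (0, 1, 0)) (w := (w0, w1, w2)) hv S

theorem roots3 {b : Fin 3 → F} (hb : Good b) :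
    cnt (fun l => ∃ j, l = b j) = 3 := by
  refine cnt_three _ _ _ hb.h01 hb.h02 hb.h12 fun x => ?_
  constructor
  · rintro ⟨j, rfl⟩
    fin_cases j <;> simp
  · rintro (h | h | h)
    exacts [⟨0, h⟩, ⟨1, h⟩, ⟨2, h⟩]

theorem Par_Ev (S : M F) (l : F) : Ev l S ↔ (Par S ∧ S 0 0 = l) := by
  simp only [Ev, Par]; tauto

/-- size of the parallel part -/
theorem par_tot {b : Fin 3 → F} (hb : Good b) :
    cnt (fun S : M F => CR b S ∧ Par S) = 3 * (Q F ^ 3 * (Q F + 1)) := by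
  rw [mul_comm, ← roots3 hb]
  refine cnt_map _ (fun S => S 0 0) _ _ ?_ ?_
  · rintro S ⟨h1, h2⟩
    exact Ev_root h1 ((Par_Ev S _).2 ⟨h2, rfl⟩)
  · rintro l ⟨j, rfl⟩
    rw [← evj_tot hb j]
    exact cnt_congr fun S => by rw [Par_Ev]; tauto

theorem np_tot {b : Fin 3 → F} (hb : Good b) :
    cnt (fun S : M F => CR b S ∧ ¬ Par S) = (Q F ^ 3 - Q F) * (Q F ^ 2 * (Q F + 2)) := by
  refine np_fib (CR b) col _ fun w hw => ?_
  obtain ⟨x, y, hyx, hxy, hx, hy, h⟩ := nf12 hw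
  rw [one_conj hyx hxy b h, c12_tot hb]

theorem cls_tot {b : Fin 3 → F} (hb : Good b) :
    cnt (fun S : M F => CR b S) =
      3 * (Q F ^ 3 * (Q F + 1)) + (Q F ^ 3 - Q F) * (Q F ^ 2 * (Q F + 2)) := by
  rw [cnt_split _ Par, par_tot hb, np_tot hb]

theorem shl_tot {b : Fin 3 → F} (hb : Good b) :
    cnt (fun S : M F => CR b S ∧ (S 1 1 = 0 ∧ S 2 1 = 0)) = (Q F ^ 2 * (Q F + 2)) * (Q F - 1) := by
  rw [← cnt_nz]
  refine cnt_map _ (fun S => S 0 1) _ _ ?_ ?_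
  · rintro S ⟨h, h1, h2⟩ h0
    apply prod_ne hb
    rw [← h.2.2, Matrix.det_fin_three]
    have h0' : S 0 1 = 0 := h0
    rw [h0', h1, h2]; ring
  · intro l hl
    rw [← sh_tot hb hl]
    exact cnt_congr fun S => by simp only [Sh]; tauto

theorem cnt_pair (P R : M F → Prop) :
    cnt (fun p : M F × M F => P p.1 ∧ R p.2) = cnt P * cnt R := cnt_prod _ _

theorem det_ne {b : Fin 3 → F} (hb : Good b) {S : M F} (h : CR b S) : S.det ≠ 0 := by
  rw [h.2.2]; exact prod_ne hb

theorem Par_left {b : Fin 3 → F} (hb : Good b) {S T : M F} (hS : CR b S) (hT : Par T)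
    (hd : T.det ≠ 0) : Par (S * T) ↔ Par S := by
  have h0 : T 0 0 ≠ 0 := by
    intro h; apply hd
    rw [Matrix.det_fin_three, h, hT.1, hT.2]; ring
  simp only [Par, mul3, hT.1, hT.2]
  simp [h0]

/-- number of pairs whose product preserves the first axis -/
theorem XE {b c : Fin 3 → F} (hb : Good b) (hc : Good c) :
    cnt (fun p : M F × M F => CR b p.1 ∧ CR c p.2 ∧ Par (p.1 * p.2)) =
      9 * (Q F ^ 3 * (Q F + 1)) ^ 2 +
      (Q F ^ 3 - Q F) * ((Q F - 1) * (Q F ^ 2 * (Q F + 2)) ^ 2) := by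
  rw [cnt_split _ (fun p : M F × M F => Par p.2)]
  congr 1
  · rw [cnt_congr (Q := fun p : M F × M F => (CR b p.1 ∧ Par p.1) ∧ (CR c p.2 ∧ Par p.2)),
      cnt_pair (fun S => CR b S ∧ Par S) (fun S => CR c S ∧ Par S), par_tot hb, par_tot hc]
    · ring
    · rintro ⟨S, T⟩
      simp only
      constructor
      · rintro ⟨⟨h1, h2, h3⟩, h4⟩
        rw [Par_left hb h1 h4 (det_ne hc h2)] at h3
        exact ⟨⟨h1, h3⟩, h2, h4⟩
      · rintro ⟨⟨h1, h3⟩, h2, h4⟩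
        exact ⟨⟨h1, h2, (Par_left hb h1 h4 (det_ne hc h2)).2 h3⟩, h4⟩
  · refine np_fib (fun p : M F × M F => CR b p.1 ∧ CR c p.2 ∧ Par (p.1 * p.2)) (fun p => col p.2) _
      fun w hw => ?_
    obtain ⟨x, y, hyx, hxy, hx, hy, h⟩ := nf12 hw
    simp only [and_assoc]
    rw [two_conj hyx hxy b c (X := fun S T => Par (S * T) ∧ col T = w)
      (Y := fun S T => Par (S * T) ∧ E12 T)]
    · rw [cnt_congr (Q := fun p : M F × M F => (CR b p.1 ∧ (p.1 1 1 = 0 ∧ p.1 2 1 = 0)) ∧ (CR c p.2 ∧ E12 p.2)),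
        cnt_pair (fun S => CR b S ∧ (S 1 1 = 0 ∧ S 2 1 = 0)) (fun S => CR c S ∧ E12 S), shl_tot hb, c12_tot hc]
      · ring
      · rintro ⟨S, T⟩
        simp only
        have : E12 T → (Par (S * T) ↔ (S 1 1 = 0 ∧ S 2 1 = 0)) := by
          rintro ⟨h1, h2, h3⟩
          simp [Par, mul3, h1, h2, h3]
        tauto
    · intro S T
      rw [h, ← conj_prod hxy]
      have : Par (S * T) ↔ Par (y * (S * T) * x) := by
        have e := fun l => Ev_conj hxy hy hx l (S * T)
        simp only [Par_Ev] at e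
        constructor
        · intro h; exact ((e _).2 ⟨h, rfl⟩).1
        · intro h; exact ((e _).1 ⟨h, rfl⟩).1
      rw [this]

theorem Par_conj {x y : M F} (hyx : y * x = 1) (hx : Ev 1 x) (hy : Ev 1 y) (S : M F) :
    Par (x * S * y) ↔ Par S := by
  have e := fun l => Ev_conj hyx hx hy l S
  simp only [Par_Ev] at e
  constructor
  · intro h; exact ((e _).1 ⟨h, rfl⟩).1
  · intro h; exact ((e _).2 ⟨h, rfl⟩).1

theorem H_eq {b c : Fin 3 → F} (hb : Good b) (hc : Good c) :
    (Q F ^ 3 - Q F) * cnt (fun p : M F × M F => CR b p.1 ∧ CR c p.2 ∧ E12 (p.1 * p.2)) =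
    (3 * (Q F ^ 3 * (Q F + 1)) + (Q F ^ 3 - Q F) * (Q F ^ 2 * (Q F + 2))) ^ 2 -
      (9 * (Q F ^ 3 * (Q F + 1)) ^ 2 +
      (Q F ^ 3 - Q F) * ((Q F - 1) * (Q F ^ 2 * (Q F + 2)) ^ 2)) := by
  have h1 := cnt_split (fun p : M F × M F => CR b p.1 ∧ CR c p.2) (fun p => Par (p.1 * p.2))
  rw [cnt_pair (CR b) (CR c), cls_tot hb, cls_tot hc] at h1
  have h2 := XE hb hc
  simp only [and_assoc] at h1
  rw [h2] at h1
  have h3 := np_fib (fun p : M F × M F => CR b p.1 ∧ CR c p.2) (fun p => col (p.1 * p.2))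
    (cnt (fun p : M F × M F => CR b p.1 ∧ CR c p.2 ∧ E12 (p.1 * p.2))) (by
      intro w hw
      obtain ⟨x, y, hyx, hxy, hx, hy, h⟩ := nf12 hw
      simp only [and_assoc]
      refine two_conj hyx hxy b c (X := fun S T => col (S * T) = w) (Y := fun S T => E12 (S * T)) ?_
      intro S T
      rw [h, conj_prod hxy])
  simp only [and_assoc, np_col] at h3
  rw [h3] at h1
  linear_combination -h1

end
end GL3Q

namespace GL3Q
set_option linter.unusedSectionVars false
set_option linter.unusedVariables false
set_option linter.unusedSimpArgs false
open Matrix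

theorem cnt_fib2 {α β : Type*} [Fintype α] [Fintype β] (P : α × β → Prop) (Q : β → Prop) (c : ℤ)
    (h1 : ∀ x y, P (x, y) → Q y) (h2 : ∀ y, Q y → cnt (fun x => P (x, y)) = c) :
    cnt P = c * cnt Q := by
  rw [← cnt_fib (fun z : β × α => P (z.2, z.1)) Q c (fun y x h => h1 x y h) h2]
  exact (cnt_equiv (Equiv.prodComm β α) P).symm

theorem cnt_sub {α : Type*} [Fintype α] (P X : α → Prop) :
    cnt (fun x => P x ∧ ¬ X x) = cnt P - cnt (fun x => P x ∧ X x) := by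
  have := cnt_split P X
  linear_combination -this

section
variable {F : Type*} [Field F] [Fintype F]

theorem bor {x y h : M F} {l : F} (hyx : y * x = 1) (hxy : x * y = 1) (hx : Ev 1 x)
    (h21 : x 2 1 = 0) (hh : Par h) : (y * h * x) 2 1 ≠ 0 ↔ h 2 1 ≠ 0 := by
  obtain ⟨y0, y1, y2⟩ := Ev_inv hyx hx
  obtain ⟨x0, x1, x2⟩ := hx
  have e1 := congrFun (congrFun hxy 2) 1
  have e2 := congrFun (congrFun hxy 2) 2
  have e3 := congrFun (congrFun hxy 1) 1
  rw [mul3] at e1 e2 e3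
  simp [x0, x1, x2, h21] at e1 e2 e3
  have hx22 : x 2 2 ≠ 0 := by intro k; rw [k] at e2; simp at e2
  have hy22 : y 2 2 ≠ 0 := by intro k; rw [k] at e2; simp at e2
  have hy21 : y 2 1 = 0 := e1.resolve_left hx22
  have hx11 : x 1 1 ≠ 0 := by intro k; rw [k, hy21] at e3; simp at e3
  have : (y * h * x) 2 1 = y 2 2 * h 2 1 * x 1 1 := by
    rw [mul3, mul3, mul3, mul3, y2, hy21, h21, hh.2]; ring
  rw [this]
  simp [hy22, hx11]

theorem nfB2 {w : F × F × F} (h1 : w.2.1 ≠ 0) (h2 : w.2.2 = 0) :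
    ∃ x y : M F, y * x = 1 ∧ x * y = 1 ∧ Ev 1 x ∧ Ev 1 y ∧ x 2 1 = 0 ∧
    ∀ S : M F, col S = w ↔ E12 (y * S * x) := by
  obtain ⟨w0, w1, w2⟩ := w
  simp only at h1 h2
  have key : ∃ x : M F, x.det ≠ 0 ∧ Ev 1 x ∧ x 2 1 = 0 ∧ x *ᵥ ![0, 1, 0] = ![w0, w1, w2] := by
    refine ⟨!![1, w0, 0; 0, w1, 0; 0, 0, 1], ?_, by simp [Ev], by simp, ?_⟩
    · rw [Matrix.det_fin_three]
      simpa using h1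
    · funext i; fin_cases i <;> simp [Matrix.mulVec, dotProduct, Fin.sum_univ_three, h2]
  obtain ⟨x, hd, hx, hx', hv⟩ := key
  obtain ⟨y, hyx, hxy⟩ := exists_inv hd
  refine ⟨x, y, hyx, hxy, hx, Ev_inv hyx hx, hx', fun S => ?_⟩
  rw [E12_col]
  exact col_conj hyx hxy hx (v := (0, 1, 0)) (w := (w0, w1, w2)) hv S

theorem nfB3 {w : F × F × F} (h2 : w.2.2 ≠ 0) :
    ∃ x y : M F, y * x = 1 ∧ x * y = 1 ∧ Ev 1 x ∧ Ev 1 y ∧ x 2 1 = 0 ∧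
    ∀ S : M F, col S = w ↔ E13 (y * S * x) := by
  obtain ⟨w0, w1, w2⟩ := w
  simp only at h2
  have key : ∃ x : M F, x.det ≠ 0 ∧ Ev 1 x ∧ x 2 1 = 0 ∧ x *ᵥ ![0, 0, 1] = ![w0, w1, w2] := by
    refine ⟨!![1, 0, w0; 0, 1, w1; 0, 0, w2], ?_, by simp [Ev], by simp, ?_⟩
    · rw [Matrix.det_fin_three]
      simpa using h2
    · funext i; fin_cases i <;> simp [Matrix.mulVec, dotProduct, Fin.sum_univ_three]
  obtain ⟨x, hd, hx, hx', hv⟩ := key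
  obtain ⟨y, hyx, hxy⟩ := exists_inv hd
  refine ⟨x, y, hyx, hxy, hx, Ev_inv hyx hx, hx', fun S => ?_⟩
  rw [E13_col]
  exact col_conj hyx hxy hx (v := (0, 0, 1)) (w := (w0, w1, w2)) hv S

theorem bor2 {x y : M F} {l : F} (hyx : y * x = 1) (hxy : x * y = 1) (hx : Ev 1 x) (hy : Ev 1 y)
    (h21 : x 2 1 = 0) (S T : M F) :
    (Ev l (S * T) ∧ (S * T) 2 1 ≠ 0) ↔
      (Ev l ((y * S * x) * (y * T * x)) ∧ ((y * S * x) * (y * T * x)) 2 1 ≠ 0) := by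
  rw [← conj_prod hxy, Ev_conj hxy hy hx]
  refine and_congr_right fun h => ?_
  exact (bor (l := l) hyx hxy hx h21 ((Par_Ev _ _).1 h).1).symm

/-- size of `N(e₂)` -/
theorem N2 {b c : Fin 3 → F} (hb : Good b) (hc : Good c) {l : F} (hl : l ≠ 0) :
    cnt (fun p : M F × M F => CR b p.1 ∧ CR c p.2 ∧ (Ev l (p.1 * p.2) ∧ (p.1 * p.2) 2 1 ≠ 0) ∧ E12 p.2) =
      (Q F ^ 2 * (Q F + 2) - 3 * Q F ^ 2) * (3 * Q F ^ 2) +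
      (Q F ^ 2 * (Q F + 2) - Q F * (Q F - 1)) * (Q F ^ 2 * (Q F + 2) - 3 * Q F ^ 2) := by
  have key : ∀ S T : M F, E12 T → ((Ev l (S * T) ∧ (S * T) 2 1 ≠ 0) ↔
      (Sh l S ∧ S 2 0 * T 0 1 + S 2 2 * T 2 1 ≠ 0)) := by
    intro S T h
    rw [Ev_Sh h]
    refine and_congr_right fun hs => ?_
    rw [mul3, hs.2.2]; simp
  rw [cnt_split _ (fun p : M F × M F => p.2 2 1 = 0)]
  congr 1
  · rw [← c12_0 hc]
    refine cnt_fib2 _ _ _ ?_ ?_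
    · rintro S T ⟨⟨h1, h2, h3, h4⟩, h5⟩
      exact ⟨h2, h4, h5⟩
    · rintro T ⟨hT, h12, h0⟩
      have hT01 : T 0 1 ≠ 0 := by
        intro h
        apply det_ne hc hT
        rw [det_E12 h12, h, h0]; ring
      rw [c12_0 hc, ← sh_tot hb hl, ← sh_E0 hb hl]
      have := cnt_sub (fun S : M F => CR b S ∧ Sh l S) (fun S => S 2 0 = 0)
      simp only [and_assoc] at this
      rw [← this]
      refine cnt_congr fun S => ?_
      simp only
      have hk := key S T h12
      rw [h0] at hk
      simp only [mul_zero, add_zero, ne_eq, mul_eq_zero, hT01, or_false] at hk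
      tauto
  · rw [show Q F ^ 2 * (Q F + 2) - 3 * Q F ^ 2 = cnt (fun T : M F => CR c T ∧ E12 T ∧ ¬ (T 2 1 = 0)) by
      have := cnt_sub (fun S : M F => CR c S ∧ E12 S) (fun S => S 2 1 = 0)
      simp only [and_assoc] at this
      rw [this, c12_tot hc, c12_0 hc]]
    refine cnt_fib2 _ _ _ ?_ ?_
    · rintro S T ⟨⟨h1, h2, h3, h4⟩, h5⟩
      exact ⟨h2, h4, h5⟩
    · rintro T ⟨hT, h12, h0⟩
      rw [← sh_tot hb hl, ← sh_GkE hb hl (- T 0 1 / T 2 1)]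
      have := cnt_sub (fun S : M F => CR b S ∧ Sh l S) (fun S => S 2 2 = (- T 0 1 / T 2 1) * S 2 0)
      simp only [and_assoc] at this
      rw [← this]
      refine cnt_congr fun S => ?_
      simp only
      have hk := key S T h12
      have e : S 2 0 * T 0 1 + S 2 2 * T 2 1 ≠ 0 ↔ ¬ (S 2 2 = (- T 0 1 / T 2 1) * S 2 0) := by
        rw [ne_eq, not_iff_not, div_mul_eq_mul_div, eq_div_iff h0]
        constructor
        · intro k; linear_combination k
        · intro k; linear_combination k
      rw [e] at hk
      tauto

theorem N3 {b c : Fin 3 → F} (hb : Good b) (hc : Good c) {l : F} (hl : l ≠ 0) :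
    cnt (fun p : M F × M F => CR b p.1 ∧ CR c p.2 ∧ (Ev l (p.1 * p.2) ∧ (p.1 * p.2) 2 1 ≠ 0) ∧ E13 p.2) =
      (Q F ^ 2 * (Q F + 2) - Q F * (Q F - 1)) * (Q F * (Q F - 1)) +
      (Q F ^ 2 * (Q F + 2) - (Q F ^ 2 + Q F + 1)) * (Q F ^ 2 * (Q F + 2) - Q F * (Q F - 1)) := by
  have key : ∀ S T : M F, E13 T → ((Ev l (S * T) ∧ (S * T) 2 1 ≠ 0) ↔
      (E31 l S ∧ S 2 0 * T 0 1 + S 2 1 * T 1 1 ≠ 0)) := by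
    rintro S T ⟨h1, h2, h3⟩
    have e : Ev l (S * T) ↔ E31 l S := by
      simp only [Ev, E31, mul3, h1, h2, h3]; simp
    rw [e]
    refine and_congr_right fun hs => ?_
    rw [mul3, hs.2.2]; simp
  rw [cnt_split _ (fun p : M F × M F => p.2 1 1 = 0)]
  congr 1
  · rw [← c13_0 hc]
    refine cnt_fib2 _ _ _ ?_ ?_
    · rintro S T ⟨⟨h1, h2, h3, h4⟩, h5⟩
      exact ⟨h2, h4, h5⟩
    · rintro T ⟨hT, h13, h0⟩
      have hT01 : T 0 1 ≠ 0 := by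
        intro h
        apply det_ne hc hT
        rw [Matrix.det_fin_three, h13.1, h13.2.1, h, h0]; ring
      rw [c13_0 hc, ← c31_tot hb hl, ← c31_0 hb hl]
      have := cnt_sub (fun S : M F => CR b S ∧ E31 l S) (fun S => S 2 0 = 0)
      simp only [and_assoc] at this
      rw [← this]
      refine cnt_congr fun S => ?_
      simp only
      have hk := key S T h13
      rw [h0] at hk
      simp only [mul_zero, add_zero, ne_eq, mul_eq_zero, hT01, or_false] at hk
      tauto
  · rw [show Q F ^ 2 * (Q F + 2) - Q F * (Q F - 1) = cnt (fun T : M F => CR c T ∧ E13 T ∧ ¬ (T 1 1 = 0)) by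
      have := cnt_sub (fun S : M F => CR c S ∧ E13 S) (fun S => S 1 1 = 0)
      simp only [and_assoc] at this
      rw [this, c13_tot hc, c13_0 hc]]
    refine cnt_fib2 _ _ _ ?_ ?_
    · rintro S T ⟨⟨h1, h2, h3, h4⟩, h5⟩
      exact ⟨h2, h4, h5⟩
    · rintro T ⟨hT, h13, h0⟩
      rw [← c31_tot hb hl, ← c31_k hb hl (- T 0 1 / T 1 1)]
      have := cnt_sub (fun S : M F => CR b S ∧ E31 l S) (fun S => S 2 1 = (- T 0 1 / T 1 1) * S 2 0)
      simp only [and_assoc] at this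
      rw [← this]
      refine cnt_congr fun S => ?_
      simp only
      have hk := key S T h13
      have e : S 2 0 * T 0 1 + S 2 1 * T 1 1 ≠ 0 ↔ ¬ (S 2 1 = (- T 0 1 / T 1 1) * S 2 0) := by
        rw [ne_eq, not_iff_not, div_mul_eq_mul_div, eq_div_iff h0]
        constructor
        · intro k; linear_combination k
        · intro k; linear_combination k
      rw [e] at hk
      tauto

/-- the constant `X₁` -/
def X1 (q : ℤ) : ℤ :=
  (q ^ 2 - q) * ((q ^ 2 * (q + 2) - 3 * q ^ 2) * (3 * q ^ 2) +
      (q ^ 2 * (q + 2) - q * (q - 1)) * (q ^ 2 * (q + 2) - 3 * q ^ 2)) +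
  (q ^ 3 - q ^ 2) * ((q ^ 2 * (q + 2) - q * (q - 1)) * (q * (q - 1)) +
      (q ^ 2 * (q + 2) - (q ^ 2 + q + 1)) * (q ^ 2 * (q + 2) - q * (q - 1)))

theorem Xn {b c : Fin 3 → F} (hb : Good b) (hc : Good c) {l : F} (hl : l ≠ 0) :
    cnt (fun p : M F × M F => CR b p.1 ∧ CR c p.2 ∧ (Ev l (p.1 * p.2) ∧ (p.1 * p.2) 2 1 ≠ 0) ∧ ¬ Par p.2) =
      X1 (Q F) := by
  rw [cnt_split _ (fun p : M F × M F => p.2 2 0 = 0), X1]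
  congr 1
  · rw [show Q F ^ 2 - Q F = cnt (fun w : F × F × F => True ∧ w.2.1 ≠ 0 ∧ w.2.2 = 0) by
      rw [cnt_p3 (fun _ => True) (fun x : F => x ≠ 0) (fun x => x = 0), cnt_triv, cnt_nz, cnt_eq]; ring]
    rw [mul_comm]
    refine cnt_map _ (fun p => col p.2) _ _ ?_ ?_
    · rintro p ⟨⟨h1, h2, h3, h4⟩, h5⟩
      exact ⟨trivial, fun h => h4 ⟨h, h5⟩, h5⟩
    · rintro w ⟨-, h1, h2⟩
      obtain ⟨x, y, hyx, hxy, hx, hy, h21, h⟩ := nfB2 h1 h2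
      rw [← N2 hb hc hl]
      rw [← two_conj hyx hxy b c (X := fun S T => (Ev l (S * T) ∧ (S * T) 2 1 ≠ 0) ∧ col T = w)
        (Y := fun S T => (Ev l (S * T) ∧ (S * T) 2 1 ≠ 0) ∧ E12 T)]
      · refine cnt_congr fun p => ?_
        have : col p.2 = w → (¬ Par p.2 ∧ p.2 2 0 = 0) := by
          rintro rfl; exact ⟨fun h => h1 h.1, h2⟩
        tauto
      · intro S T
        rw [h, bor2 hyx hxy hx hy h21]
  · rw [show Q F ^ 3 - Q F ^ 2 = cnt (fun w : F × F × F => True ∧ True ∧ w.2.2 ≠ 0) by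
      rw [cnt_p3 (fun _ : F => True) (fun x : F => True) (fun x => x ≠ 0), cnt_triv, cnt_nz]; ring]
    rw [mul_comm]
    refine cnt_map _ (fun p => col p.2) _ _ ?_ ?_
    · rintro p ⟨⟨h1, h2, h3, h4⟩, h5⟩
      exact ⟨trivial, trivial, h5⟩
    · rintro w ⟨-, -, h2⟩
      obtain ⟨x, y, hyx, hxy, hx, hy, h21, h⟩ := nfB3 h2
      rw [← N3 hb hc hl]
      rw [← two_conj hyx hxy b c (X := fun S T => (Ev l (S * T) ∧ (S * T) 2 1 ≠ 0) ∧ col T = w)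
        (Y := fun S T => (Ev l (S * T) ∧ (S * T) 2 1 ≠ 0) ∧ E13 T)]
      · refine cnt_congr fun p => ?_
        have : col p.2 = w → (¬ Par p.2 ∧ ¬ (p.2 2 0 = 0)) := by
          rintro rfl; exact ⟨fun h => h2 h.2, h2⟩
        tauto
      · intro S T
        rw [h, bor2 hyx hxy hx hy h21]

/-- for a generic eigenvalue the parallel part is empty -/
theorem Xs2_gen {b c : Fin 3 → F} (hb : Good b) (hc : Good c) {l : F} (hl : l ≠ 0)
    (hg : ∀ i j, b i * c j ≠ l) :
    cnt (fun p : M F × M F => CR b p.1 ∧ CR c p.2 ∧ Ev l (p.1 * p.2) ∧ (p.1 * p.2) 2 1 ≠ 0) =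
      X1 (Q F) := by
  rw [← Xn hb hc hl]
  refine cnt_congr fun ⟨S, T⟩ => ?_
  simp only
  have : CR b S → CR c T → Ev l (S * T) → ¬ Par T := by
    intro h1 h2 h3 h4
    have h5 := (Par_left hb h1 h4 (det_ne hc h2)).1 ((Par_Ev _ _).1 h3).1
    have e1 := (Par_Ev S (S 0 0)).2 ⟨h5, rfl⟩
    have e2 := (Par_Ev T (T 0 0)).2 ⟨h4, rfl⟩
    obtain ⟨i, hi⟩ := Ev_root h1 e1
    obtain ⟨j, hj⟩ := Ev_root h2 e2
    apply hg i j
    rw [← hi, ← hj, ← h3.1]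
    exact (Ev_mul e1 e2).1.symm
  tauto

theorem par_X {b : Fin 3 → F} (hb : Good b) (X : M F → Prop) (v : ℤ)
    (h : ∀ j, cnt (fun S : M F => CR b S ∧ Ev (b j) S ∧ X S) = v) :
    cnt (fun S : M F => CR b S ∧ Par S ∧ X S) = 3 * v := by
  rw [mul_comm, ← roots3 hb]
  refine cnt_map _ (fun S => S 0 0) _ _ ?_ ?_
  · rintro S ⟨h1, h2, _⟩
    exact Ev_root h1 ((Par_Ev S _).2 ⟨h2, rfl⟩)
  · rintro l ⟨j, rfl⟩
    rw [← h j]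
    exact cnt_congr fun S => by rw [Par_Ev]; tauto

theorem Xs2_tot {b c : Fin 3 → F} (hb : Good b) (hc : Good c) :
    cnt (fun p : M F × M F => CR b p.1 ∧ CR c p.2 ∧ Par (p.1 * p.2) ∧ (p.1 * p.2) 2 1 ≠ 0) =
      (Q F - 1) * X1 (Q F) + (
        (3 * (Q F ^ 3 * (Q F + 1)) - 3 * (2 * Q F ^ 3)) * (3 * (2 * Q F ^ 3)) +
        (3 * (Q F ^ 3 * (Q F + 1)) - 3 * (Q F ^ 2 * (Q F - 1))) *
          (3 * (Q F ^ 3 * (Q F + 1)) - 3 * (2 * Q F ^ 3))) := by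
  rw [cnt_split _ (fun p : M F × M F => ¬ Par p.2)]
  congr 1
  · rw [mul_comm, ← cnt_nz]
    refine cnt_map _ (fun p => (p.1 * p.2) 0 0) _ _ ?_ ?_
    · rintro ⟨S, T⟩ ⟨⟨h1, h2, h3, h4⟩, h5⟩ h6
      have : (S * T).det ≠ 0 := by
        rw [Matrix.det_mul]; exact mul_ne_zero (det_ne hb h1) (det_ne hc h2)
      apply this
      simp only at h3 h6
      rw [Matrix.det_fin_three, h6, h3.1, h3.2]; ring
    · intro l hl
      rw [← Xn hb hc hl]
      refine cnt_congr fun p => ?_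
      simp only [Par_Ev]
      tauto
  · have key : ∀ S T : M F, CR b S → CR c T → Par T →
        ((Par (S * T) ∧ (S * T) 2 1 ≠ 0) ↔ (Par S ∧ S 2 1 * T 1 1 + S 2 2 * T 2 1 ≠ 0)) := by
      intro S T hS hT h
      rw [Par_left hb hS h (det_ne hc hT)]
      refine and_congr_right fun hs => ?_
      rw [mul3, hs.2]; simp
    rw [cnt_split _ (fun p : M F × M F => p.2 2 1 = 0)]
    have ht := cnt_sub (fun S : M F => CR b S ∧ Par S) (fun S => S 2 1 = 0)
    have t0 := par_X hb _ _ (evj_0 hb)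
    have t0' := par_X hc _ _ (evj_0 hc)
    simp only [and_assoc] at ht
    rw [t0, par_tot hb] at ht
    congr 1
    · rw [← ht, ← t0']
      refine cnt_fib2 _ _ _ ?_ ?_
      · rintro S T ⟨⟨⟨h1, h2, h3, h4⟩, h5⟩, h6⟩
        exact ⟨h2, not_not.1 h5, h6⟩
      · rintro T ⟨hT, hp, h0⟩
        have hT11 : T 1 1 ≠ 0 := by
          intro h
          apply det_ne hc hT
          rw [Matrix.det_fin_three, hp.1, hp.2, h, h0]; ring
        refine cnt_congr fun S => ?_
        simp only
        have hk := fun h => key S T h hT hp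
        rw [h0] at hk
        simp only [mul_zero, add_zero, ne_eq, mul_eq_zero, hT11, or_false] at hk
        tauto
    · have ht' := cnt_sub (fun S : M F => CR c S ∧ Par S) (fun S => S 2 1 = 0)
      simp only [and_assoc] at ht'
      rw [t0', par_tot hc] at ht'
      rw [← ht']
      refine cnt_fib2 _ _ _ ?_ ?_
      · rintro S T ⟨⟨⟨h1, h2, h3, h4⟩, h5⟩, h6⟩
        exact ⟨h2, not_not.1 h5, h6⟩
      · rintro T ⟨hT, hp, h0⟩
        have hu := cnt_sub (fun S : M F => CR b S ∧ Par S) (fun S => S 2 2 = (- T 1 1 / T 2 1) * S 2 1)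
        simp only [and_assoc] at hu
        rw [par_X hb _ _ (fun j => evj_k hb j (- T 1 1 / T 2 1)), par_tot hb] at hu
        rw [← hu]
        refine cnt_congr fun S => ?_
        simp only
        have hk := fun h => key S T h hT hp
        have e : S 2 1 * T 1 1 + S 2 2 * T 2 1 ≠ 0 ↔ ¬ (S 2 2 = (- T 1 1 / T 2 1) * S 2 1) := by
          rw [ne_eq, not_iff_not, div_mul_eq_mul_div, eq_div_iff h0]
          constructor
          · intro k; linear_combination k
          · intro k; linear_combination k
        rw [e] at hk
        tauto

end
end GL3Q

namespace GL3Q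
set_option linter.unusedSectionVars false
set_option linter.unusedVariables false
set_option linter.unusedSimpArgs false
open Matrix

section
variable {F : Type*} [Field F] [Fintype F]

/-- flip along the anti-diagonal -/
def flip (S : M F) : M F := fun i j => S (Fin.rev j) (Fin.rev i)

theorem flip_flip (S : M F) : flip (flip S) = S := by
  funext i j; simp [flip]

theorem flip_mul (S T : M F) : flip S * flip T = flip (T * S) := by
  funext i j
  simp only [flip, mul3]
  fin_cases i <;> fin_cases j <;> simp [Fin.rev] <;> ring

theorem Pc_flip (g1 g2 g3 : F) (S : M F) : Pc g1 g2 g3 (flip S) ↔ Pc g1 g2 g3 S := by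
  have e1 : tr3 (flip S) = tr3 S := by simp [tr3, flip, Fin.rev]; ring
  have e2 : c23 (flip S) = c23 S := by simp [c23, flip, Fin.rev]; ring
  have e3 : (flip S).det = S.det := by
    rw [Matrix.det_fin_three, Matrix.det_fin_three]; simp [flip, Fin.rev]; ring
  rw [Pc, Pc, e1, e2, e3]

def flipE : (M F × M F) ≃ (M F × M F) where
  toFun p := (flip p.2, flip p.1)
  invFun p := (flip p.2, flip p.1)
  left_inv p := by simp [flip_flip]
  right_inv p := by simp [flip_flip]

theorem flip_cnt (b c : Fin 3 → F) (X : M F → Prop) :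
    cnt (fun p : M F × M F => CR b p.1 ∧ CR c p.2 ∧ X (p.1 * p.2)) =
    cnt (fun p : M F × M F => CR c p.1 ∧ CR b p.2 ∧ X (flip (p.1 * p.2))) := by
  rw [← cnt_equiv flipE]
  refine cnt_congr fun ⟨S, T⟩ => ?_
  show CR b (flip T) ∧ CR c (flip S) ∧ X (flip T * flip S) ↔ CR c S ∧ CR b T ∧ X (flip (S * T))
  rw [flip_mul, CR, CR, Pc_flip, Pc_flip]
  exact and_left_comm

/-- from `E12` to free first column -/
theorem Hs_rel (b c : Fin 3 → F) (Z : F → Prop) :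
    Q F * (Q F - 1) *
      cnt (fun p : M F × M F => CR b p.1 ∧ CR c p.2 ∧
        (E12 (p.1 * p.2) ∧ (p.1 * p.2) 2 1 = 0 ∧ Z ((p.1 * p.2) 2 2))) =
    cnt (fun p : M F × M F => CR c p.1 ∧ CR b p.2 ∧
      (Par (p.1 * p.2) ∧ (p.1 * p.2) 2 1 ≠ 0 ∧ Z ((p.1 * p.2) 0 0))) := by
  have e1 := flip_cnt b c (fun h => h 2 0 = 0 ∧ h 2 1 = 0 ∧ h 1 0 ≠ 0 ∧ Z (h 2 2))
  have e2 : cnt (fun p : M F × M F => CR c p.1 ∧ CR b p.2 ∧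
      (Par (p.1 * p.2) ∧ (p.1 * p.2) 2 1 ≠ 0 ∧ Z ((p.1 * p.2) 0 0))) =
      cnt (fun p : M F × M F => CR b p.1 ∧ CR c p.2 ∧
        ((p.1 * p.2) 2 0 = 0 ∧ (p.1 * p.2) 2 1 = 0 ∧ (p.1 * p.2) 1 0 ≠ 0 ∧ Z ((p.1 * p.2) 2 2))) := by
    rw [e1]
    refine cnt_congr fun p => ?_
    simp only [Par, flip, Fin.rev_zero, show Fin.rev (1 : Fin 3) = 1 from rfl,
      show Fin.rev (2 : Fin 3) = 0 from rfl, show Fin.last 2 = 2 from rfl]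
    tauto
  rw [e2]
  symm
  rw [mul_comm, show Q F * (Q F - 1) = cnt (fun w : F × F => True ∧ w.2 ≠ 0) by
    rw [cnt_p2 (fun _ => True) (fun x : F => x ≠ 0), cnt_triv, cnt_nz]]
  refine cnt_map _ (fun p => ((p.1 * p.2) 0 0, (p.1 * p.2) 1 0)) _ _ ?_ ?_
  · rintro p ⟨h1, h2, h3, h4, h5, h6⟩
    exact ⟨trivial, h5⟩
  · rintro ⟨u, v⟩ ⟨-, hv⟩
    simp only at hv
    let x : M F := !![1, u, 0; 0, v, 0; 0, 0, 1]
    let y : M F := !![1, -u / v, 0; 0, 1 / v, 0; 0, 0, 1]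
    have hyx : y * x = 1 := by
      ext i j
      fin_cases i <;> fin_cases j <;> simp [x, y, Matrix.mul_apply, Fin.sum_univ_three] <;>
        field_simp <;> ring
    have hxy : x * y = 1 := mul_eq_one_comm.1 hyx
    rw [← two_conj hyx hxy b c (X := fun S T => (S * T) 2 0 = 0 ∧ (S * T) 2 1 = 0 ∧ Z ((S * T) 2 2) ∧
        (S * T) 0 0 = u ∧ (S * T) 1 0 = v)
        (Y := fun S T => E12 (S * T) ∧ (S * T) 2 1 = 0 ∧ Z ((S * T) 2 2))]
    · refine cnt_congr fun p => ?_
      have : (p.1 * p.2) 1 0 = v → (p.1 * p.2) 1 0 ≠ 0 := by intro h; rw [h]; exact hv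
      simp only [Prod.mk.injEq]
      tauto
    · intro S T
      rw [← conj_prod hxy]
      generalize S * T = h
      have f0 : (y * h * x) 0 0 = h 0 0 - u / v * h 1 0 := by
        simp only [mul3]; simp [x, y]; ring
      have f1 : (y * h * x) 1 0 = h 1 0 / v := by
        simp only [mul3]; simp [x, y]; ring
      have f2 : (y * h * x) 2 0 = h 2 0 := by
        simp only [mul3]; simp [x, y]
      have f3 : (y * h * x) 2 1 = h 2 0 * u + h 2 1 * v := by
        simp only [mul3]; simp [x, y]
      have f4 : (y * h * x) 2 2 = h 2 2 := by
        simp only [mul3]; simp [x, y]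
      rw [E12, f0, f1, f2, f3, f4]
      constructor
      · rintro ⟨h1, h2, h3, h4, h5⟩
        rw [h1, h2, h4, h5]
        refine ⟨⟨by field_simp; ring, by field_simp, rfl⟩, by ring, h3⟩
      · rintro ⟨⟨h1, h2, h3⟩, h4, h5⟩
        rw [div_eq_one_iff_eq hv] at h2
        rw [h3, zero_mul, zero_add] at h4
        rw [h2] at h1
        refine ⟨h3, (mul_eq_zero.1 h4).resolve_right hv, h5, ?_, h2⟩
        field_simp at h1
        linear_combination h1

theorem Hs_tot {b c : Fin 3 → F} (hb : Good b) (hc : Good c) :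
    Q F * (Q F - 1) *
      cnt (fun p : M F × M F => CR b p.1 ∧ CR c p.2 ∧ (E12 (p.1 * p.2) ∧ (p.1 * p.2) 2 1 = 0)) =
      (Q F - 1) * X1 (Q F) + (
        (3 * (Q F ^ 3 * (Q F + 1)) - 3 * (2 * Q F ^ 3)) * (3 * (2 * Q F ^ 3)) +
        (3 * (Q F ^ 3 * (Q F + 1)) - 3 * (Q F ^ 2 * (Q F - 1))) *
          (3 * (Q F ^ 3 * (Q F + 1)) - 3 * (2 * Q F ^ 3))) := by
  rw [← Xs2_tot hc hb]
  have := Hs_rel b c (fun _ => True)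
  simpa only [and_true] using this

theorem Hs_nu {b c : Fin 3 → F} (hb : Good b) (hc : Good c) {l : F} (hl : l ≠ 0)
    (hg : ∀ i j, b i * c j ≠ l) :
    Q F * (Q F - 1) *
      cnt (fun p : M F × M F => CR b p.1 ∧ CR c p.2 ∧
        (E12 (p.1 * p.2) ∧ (p.1 * p.2) 2 1 = 0 ∧ (p.1 * p.2) 2 2 = l)) = X1 (Q F) := by
  rw [← Xs2_gen hc hb hl (fun i j => by rw [mul_comm]; exact hg j i), Hs_rel b c (fun x => x = l)]
  refine cnt_congr fun p => ?_
  rw [Par_Ev]; tauto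

theorem root22 {c : Fin 3 → F} {T : M F} (h : CR c T) (h0 : T 2 0 = 0) (h1 : T 2 1 = 0) :
    ∃ j, T 2 2 = c j := by
  obtain ⟨e1, e2, e3⟩ := h
  rw [Matrix.det_fin_three] at e3
  simp only [tr3, c23, h0, h1] at e1 e2 e3
  have : ga (c 0 + c 1 + c 2) (c 0 * c 1 + c 0 * c 2 + c 1 * c 2) (c 0 * c 1 * c 2) (T 2 2) = 0 := by
    rw [← e1, ← e2, ← e3]; simp only [ga]; ring
  rcases (ga_roots c _).1 this with h | h | h
  · exact ⟨0, h⟩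
  · exact ⟨1, h⟩
  · exact ⟨2, h⟩

theorem gen_np {b c : Fin 3 → F} (hb : Good b) (hc : Good c) {l : F} (hg : ∀ i j, b i * c j ≠ l)
    {S T : M F} (h1 : CR b S) (h2 : CR c T) (h3 : Ev l (S * T)) : ¬ Par T := by
  intro h4
  have h5 := (Par_left hb h1 h4 (det_ne hc h2)).1 ((Par_Ev _ _).1 h3).1
  have e1 := (Par_Ev S (S 0 0)).2 ⟨h5, rfl⟩
  have e2 := (Par_Ev T (T 0 0)).2 ⟨h4, rfl⟩
  obtain ⟨i, hi⟩ := Ev_root h1 e1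
  obtain ⟨j, hj⟩ := Ev_root h2 e2
  apply hg i j
  rw [← hi, ← hj, ← h3.1]
  exact (Ev_mul e1 e2).1.symm

theorem Y_eq {b c r : Fin 3 → F} (hb : Good b) (hc : Good c) (hr : Good r)
    (hp : (b 0 * b 1 * b 2) * (c 0 * c 1 * c 2) = r 0 * r 1 * r 2)
    (hg : ∀ k i j, b i * c j ≠ r k) :
    cnt (fun p : M F × M F => CR b p.1 ∧ CR c p.2 ∧ (Ev (r 0) (p.1 * p.2) ∧ CR r (p.1 * p.2))) =
      (Q F ^ 3 - Q F) * ((Q F ^ 2 + 3 * Q F + 1) * (Q F ^ 2 * (Q F + 2) - 3 * Q F ^ 2) +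
        Q F * (Q F - 1) * (3 * Q F ^ 2)) := by
  have hE : cnt (fun p : M F × M F => CR b p.1 ∧ CR c p.2 ∧
      ((Ev (r 0) (p.1 * p.2) ∧ CR r (p.1 * p.2)) ∧ E12 p.2)) =
      (Q F ^ 2 + 3 * Q F + 1) * (Q F ^ 2 * (Q F + 2) - 3 * Q F ^ 2) +
        Q F * (Q F - 1) * (3 * Q F ^ 2) := by
    rw [cnt_split _ (fun p : M F × M F => ¬ (p.2 2 1 = 0))]
    congr 1
    · rw [show Q F ^ 2 * (Q F + 2) - 3 * Q F ^ 2 = cnt (fun T : M F => CR c T ∧ E12 T ∧ ¬ (T 2 1 = 0)) by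
        have := cnt_sub (fun S : M F => CR c S ∧ E12 S) (fun S => S 2 1 = 0)
        simp only [and_assoc] at this
        rw [this, c12_tot hc, c12_0 hc]]
      refine cnt_fib2 _ _ _ ?_ ?_
      · rintro S T ⟨⟨h1, h2, h3, h4⟩, h5⟩
        exact ⟨h2, h4, h5⟩
      · rintro T ⟨hT, h12, h0⟩
        rw [← fcD_cyc hr hb h12 h0 (by rw [hT.2.2, hp]), fc]
        refine cnt_congr fun S => ?_
        simp only
        tauto
    · rw [← c12_0 hc]
      refine cnt_fib2 _ _ _ ?_ ?_
      · rintro S T ⟨⟨h1, h2, h3, h4⟩, h5⟩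
        exact ⟨h2, h4, not_not.1 h5⟩
      · rintro T ⟨hT, h12, h0⟩
        obtain ⟨k, hk⟩ := root22 hT h12.2.2 h0
        rw [← fcD_semi hr hb h12 h0 (by rw [hT.2.2, hp])
          (by intro j i; rw [hk, mul_comm]; exact hg i j k), fc]
        refine cnt_congr fun S => ?_
        simp only
        tauto
  rw [← hE]
  rw [← np_fib (fun p : M F × M F => CR b p.1 ∧ CR c p.2 ∧ (Ev (r 0) (p.1 * p.2) ∧ CR r (p.1 * p.2)))
    (fun p => col p.2)]
  · refine cnt_congr fun ⟨S, T⟩ => ?_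
    simp only
    rw [np_col]
    have := gen_np hb hc (hg 0) (S := S) (T := T)
    tauto
  · intro w hw
    obtain ⟨x, y, hyx, hxy, hx, hy, h⟩ := nf12 hw
    rw [← two_conj hyx hxy b c (X := fun S T => (Ev (r 0) (S * T) ∧ CR r (S * T)) ∧ col T = w)
        (Y := fun S T => (Ev (r 0) (S * T) ∧ CR r (S * T)) ∧ E12 T)]
    · refine cnt_congr fun p => ?_
      tauto
    · intro S T
      rw [h, ← conj_prod hxy, Ev_conj hxy hy hx, CR_conj hxy]

end
end GL3Q

namespace GL3Q
set_option linter.unusedSectionVars false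
set_option linter.unusedVariables false
set_option linter.unusedSimpArgs false
open Matrix

section
variable {F : Type*} [Field F] [Fintype F]

/-- triples with prescribed product eigenvector and a condition on `h` -/
noncomputable def tri (b c r : Fin 3 → F) (X : M F → Prop) : ℤ :=
  cnt (fun p : (M F × M F) × M F => RU p.2 ∧ CR b p.1.1 ∧ CR c p.1.2 ∧
    ((Ev (r 0) (p.2 * (p.1.1 * p.1.2)) ∧ CR r (p.2 * (p.1.1 * p.1.2))) ∧ X (p.1.1 * p.1.2)))

theorem tri_fib {b c r : Fin 3 → F}
    (hp : (b 0 * b 1 * b 2) * (c 0 * c 1 * c 2) = r 0 * r 1 * r 2) (X : M F → Prop) (k : ℤ)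
    (hk : ∀ h : M F, h.det = r 0 * r 1 * r 2 → X h → fc RU r h = k) :
    tri b c r X = k * cnt (fun p : M F × M F => CR b p.1 ∧ CR c p.2 ∧ X (p.1 * p.2)) := by
  refine cnt_fib _ _ k (fun x y h => ⟨h.2.1, h.2.2.1, h.2.2.2.2⟩) fun ⟨S, T⟩ ⟨h1, h2, h3⟩ => ?_
  have hd : (S * T).det = r 0 * r 1 * r 2 := by
    rw [Matrix.det_mul, h1.2.2, h2.2.2, hp]
  rw [← hk _ hd h3]
  simp only at h1 h2 h3
  unfold fc
  refine cnt_congr fun R => ?_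
  simp only
  tauto

theorem tri_split (b c r : Fin 3 → F) (X Z : M F → Prop) :
    tri b c r X = tri b c r (fun h => X h ∧ Z h) + tri b c r (fun h => X h ∧ ¬ Z h) := by
  unfold tri
  rw [cnt_split _ (fun p : (M F × M F) × M F => Z (p.1.1 * p.1.2))]
  congr 1 <;> exact cnt_congr fun p => by tauto

theorem K_eq {b c r : Fin 3 → F} (hb : Good b) (hc : Good c) (hr : Good r)
    (hp : (b 0 * b 1 * b 2) * (c 0 * c 1 * c 2) = r 0 * r 1 * r 2)
    (hg : ∀ k i j, b i * c j ≠ r k) :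
    tri b c r E12 = (Q F ^ 2 + Q F) *
      (cnt (fun p : M F × M F => CR b p.1 ∧ CR c p.2 ∧ E12 (p.1 * p.2)) -
       cnt (fun p : M F × M F => CR b p.1 ∧ CR c p.2 ∧ (E12 (p.1 * p.2) ∧ (p.1 * p.2) 2 1 = 0))) +
      Q F * (Q F - 1) *
       cnt (fun p : M F × M F => CR b p.1 ∧ CR c p.2 ∧ (E12 (p.1 * p.2) ∧ (p.1 * p.2) 2 1 = 0)) +
      2 * X1 (Q F) := by
  classical
  rw [tri_split b c r E12 (fun h => h 2 1 = 0),
    tri_split b c r _ (fun h => h 2 2 = r 1 ∨ h 2 2 = r 2)]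
  rw [tri_fib hp (fun h => E12 h ∧ ¬ h 2 1 = 0) _ (fun h hd hh => fcRU_cyc hr hh.1 hh.2 hd)]
  rw [tri_fib hp (fun h => (E12 h ∧ h 2 1 = 0) ∧ (h 2 2 = r 1 ∨ h 2 2 = r 2))
    (2 * (Q F * (Q F - 1)))
    (fun h hd hh => by rw [fcRU_semi hr hh.1.1 hh.1.2 hd, if_pos hh.2]; ring)]
  rw [tri_fib hp (fun h => (E12 h ∧ h 2 1 = 0) ∧ ¬ (h 2 2 = r 1 ∨ h 2 2 = r 2))
    (Q F * (Q F - 1))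
    (fun h hd hh => by rw [fcRU_semi hr hh.1.1 hh.1.2 hd, if_neg hh.2]; ring)]
  have e1 := cnt_split (fun p : M F × M F => CR b p.1 ∧ CR c p.2 ∧ E12 (p.1 * p.2))
    (fun p => (p.1 * p.2) 2 1 = 0)
  have e2 := cnt_split (fun p : M F × M F => CR b p.1 ∧ CR c p.2 ∧
    (E12 (p.1 * p.2) ∧ (p.1 * p.2) 2 1 = 0))
    (fun p => (p.1 * p.2) 2 2 = r 1 ∨ (p.1 * p.2) 2 2 = r 2)
  have e3 : cnt (fun p : M F × M F => CR b p.1 ∧ CR c p.2 ∧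
      ((E12 (p.1 * p.2) ∧ (p.1 * p.2) 2 1 = 0) ∧ ((p.1 * p.2) 2 2 = r 1 ∨ (p.1 * p.2) 2 2 = r 2))) =
      _ + _ := cnt_or (Q := fun p : M F × M F => CR b p.1 ∧ CR c p.2 ∧
        (E12 (p.1 * p.2) ∧ (p.1 * p.2) 2 1 = 0 ∧ (p.1 * p.2) 2 2 = r 1))
        (R := fun p : M F × M F => CR b p.1 ∧ CR c p.2 ∧
        (E12 (p.1 * p.2) ∧ (p.1 * p.2) 2 1 = 0 ∧ (p.1 * p.2) 2 2 = r 2))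
        (fun p => by tauto)
        (fun p h h' => hr.h12 (h.2.2.2.2.symm.trans h'.2.2.2.2))
  have h1 := Hs_nu hb hc hr.h1 (hg 1)
  have h2 := Hs_nu hb hc hr.h2 (hg 2)
  simp only [and_assoc] at e1 e2 e3 h1 h2 ⊢
  rw [e1]
  rw [e3] at e2 ⊢
  linear_combination Q F * (Q F - 1) * (-e2) + h1 + h2

theorem L_eq {b c : Fin 3 → F} (hb : Good b) (hc : Good c) {l : F} (hl : l ≠ 0)
    (hg : ∀ i j, b i * c j ≠ l) (u : F) :
    cnt (fun p : M F × M F => CR b p.1 ∧ CR c p.2 ∧ Ev l (p.1 * p.2) ∧ qh (p.1 * p.2) u ≠ 0) =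
      X1 (Q F) := by
  rw [← Xs2_gen hb hc hl hg]
  let y : M F := !![1, 0, 0; 0, 1, 0; 0, u, 1]
  let x : M F := !![1, 0, 0; 0, 1, 0; 0, -u, 1]
  have hyx : y * x = 1 := by
    ext i j
    fin_cases i <;> fin_cases j <;> simp [x, y, Matrix.mul_apply, Fin.sum_univ_three]
  have hxy : x * y = 1 := mul_eq_one_comm.1 hyx
  refine two_conj hyx hxy b c (X := fun S T => Ev l (S * T) ∧ qh (S * T) u ≠ 0)
    (Y := fun S T => Ev l (S * T) ∧ (S * T) 2 1 ≠ 0) ?_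
  intro S T
  rw [← conj_prod hxy, Ev_conj hxy (by simp [Ev, y]) (by simp [Ev, x])]
  have e : (y * (S * T) * x) 2 1 = qh (S * T) u := by
    generalize S * T = h
    simp only [mul3, qh, x, y]
    simp
    ring
  rw [e]

theorem L_inf {b c : Fin 3 → F} (hb : Good b) (hc : Good c) {l : F} (hl : l ≠ 0)
    (hg : ∀ i j, b i * c j ≠ l) :
    cnt (fun p : M F × M F => CR b p.1 ∧ CR c p.2 ∧ Ev l (p.1 * p.2) ∧ (p.1 * p.2) 1 2 ≠ 0) =
      X1 (Q F) := by
  rw [← Xs2_gen hb hc hl hg]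
  let y : M F := !![1, 0, 0; 0, 0, 1; 0, 1, 0]
  have hyx : y * y = 1 := by
    ext i j
    fin_cases i <;> fin_cases j <;> simp [y, Matrix.mul_apply, Fin.sum_univ_three]
  refine two_conj hyx hyx b c (X := fun S T => Ev l (S * T) ∧ (S * T) 1 2 ≠ 0)
    (Y := fun S T => Ev l (S * T) ∧ (S * T) 2 1 ≠ 0) ?_
  intro S T
  rw [← conj_prod hyx, Ev_conj hyx (by simp [Ev, y]) (by simp [Ev, y])]
  have e : (y * (S * T) * y) 2 1 = (S * T) 1 2 := by
    generalize S * T = h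
    simp only [mul3, y]
    simp
  rw [e]

open scoped Classical in
theorem E_eq {b c r : Fin 3 → F} (hb : Good b) (hc : Good c) (hr : Good r)
    (hp : (b 0 * b 1 * b 2) * (c 0 * c 1 * c 2) = r 0 * r 1 * r 2)
    (hg : ∀ k i j, b i * c j ≠ r k) :
    tri b c r (Ev (r 0)) = Q F * (Q F - 1) * ((Q F + 1) * X1 (Q F) + (Q F - 1) *
      cnt (fun p : M F × M F => CR b p.1 ∧ CR c p.2 ∧ (Ev (r 0) (p.1 * p.2) ∧ CR r (p.1 * p.2)))) := by
  have e1 : (Q F) * X1 (Q F) = ∑ p : M F × M F, if CR b p.1 ∧ CR c p.2 ∧ Ev (r 0) (p.1 * p.2) then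
      cnt (fun u : F => qh (p.1 * p.2) u ≠ 0) else 0 := by
    rw [mul_comm]
    have := cnt_fib2 (fun z : (M F × M F) × F => CR b z.1.1 ∧ CR c z.1.2 ∧ Ev (r 0) (z.1.1 * z.1.2) ∧
      qh (z.1.1 * z.1.2) z.2 ≠ 0) (fun _ => True) (X1 (Q F)) (fun _ _ _ => trivial)
      (fun u _ => L_eq hb hc hr.h0 (hg 0) u)
    rw [cnt_true] at this
    rw [show (Q F : ℤ) = Fintype.card F from rfl] at *
    rw [← this, cnt_sum_fst]
    refine Finset.sum_congr rfl fun p _ => ?_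
    rw [← cnt_prop_and]
    exact cnt_congr fun u => by tauto
  have e2 := L_inf hb hc hr.h0 (hg 0)
  unfold cnt at e2
  have e3 : cnt (fun p : M F × M F => CR b p.1 ∧ CR c p.2 ∧ (Ev (r 0) (p.1 * p.2) ∧ CR r (p.1 * p.2)))
    = _ := rfl
  conv_rhs at e3 => unfold cnt
  rw [e3, add_mul, e1, one_mul, ← e2, ← Finset.sum_add_distrib, Finset.mul_sum,
    ← Finset.sum_add_distrib, Finset.mul_sum, tri, cnt_sum_fst]
  refine Finset.sum_congr rfl fun ⟨S, T⟩ _ => ?_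
  by_cases h : CR b S ∧ CR c T ∧ Ev (r 0) (S * T)
  · obtain ⟨h1, h2, h3⟩ := h
    have hd : (S * T).det = r 0 * r 1 * r 2 := by
      rw [Matrix.det_mul, h1.2.2, h2.2.2, hp]
    have := fcRU_eig hr h3 hd
    unfold fc Lh at this
    simp only [h1, h2, h3, true_and, and_true, if_true]
    convert this using 1
  · rw [cnt_false, if_neg (by simpa using h), if_neg, if_neg]
    · simp
    · simp only; tauto
    · simp only; tauto
    · simp only; tauto

theorem RU_eig1 {T : M F} (hT : RU T) (h : Par T) : T 0 0 = 1 := by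
  obtain ⟨⟨e1, e2, e3⟩, -⟩ := hT
  rw [Matrix.det_fin_three] at e3
  simp only [tr3, c23, h.1, h.2] at e1 e2 e3
  have : (T 0 0 - 1) ^ 3 = 0 := by
    linear_combination (-T 0 0 ^ 2) * (-e1) * 1 + (-T 0 0) * e2 + e3
  exact sub_eq_zero.1 (pow_eq_zero_iff (by norm_num) |>.1 this)

theorem S_eq {b c r : Fin 3 → F} (hb : Good b) (hc : Good c) (hr : Good r)
    (hp : (b 0 * b 1 * b 2) * (c 0 * c 1 * c 2) = r 0 * r 1 * r 2) :
    tri b c r (fun _ => True) = (Q F ^ 3 - Q F) * tri b c r E12 + tri b c r (Ev (r 0)) := by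
  rw [tri_split b c r _ Par, add_comm]
  congr 1
  · rw [← np_fib (fun p : (M F × M F) × M F => RU p.2 ∧ CR b p.1.1 ∧ CR c p.1.2 ∧
      (Ev (r 0) (p.2 * (p.1.1 * p.1.2)) ∧ CR r (p.2 * (p.1.1 * p.1.2))))
      (fun p => col (p.1.1 * p.1.2))]
    · refine cnt_congr fun p => ?_
      rw [np_col]; tauto
    · intro w hw
      obtain ⟨x, y, hyx, hxy, hx, hy, h⟩ := nf12 hw
      unfold tri
      rw [← three_conj hyx hxy b c (X := fun R S T => (Ev (r 0) (R * (S * T)) ∧ CR r (R * (S * T)))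
        ∧ col (S * T) = w) (Y := fun R S T => (Ev (r 0) (R * (S * T)) ∧ CR r (R * (S * T)))
        ∧ E12 (S * T))]
      · exact cnt_congr fun p => by tauto
      · intro R S T
        rw [h, ← conj_prod hxy, ← conj_prod hxy, Ev_conj hxy hy hx, CR_conj hxy]
  · refine cnt_congr fun ⟨⟨S, T⟩, R⟩ => ?_
    simp only [true_and]
    constructor
    · rintro ⟨h1, h2, h3, ⟨h4, h5⟩, h6⟩
      refine ⟨h1, h2, h3, ⟨h4, h5⟩, ?_⟩
      have hd : (S * T).det ≠ 0 := by
        rw [Matrix.det_mul]; exact mul_ne_zero (det_ne hb h2) (det_ne hc h3)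
      generalize S * T = h at *
      obtain ⟨a1, a2⟩ := h6
      have h00 : h 0 0 ≠ 0 := by
        intro h0; apply hd; rw [Matrix.det_fin_three, a1, a2, h0]; ring
      obtain ⟨f1, f2, f3⟩ := h4
      simp only [mul3, a1, a2, mul_zero, add_zero] at f1 f2 f3
      have hP : Par R := ⟨(mul_eq_zero.1 f2).resolve_right h00, (mul_eq_zero.1 f3).resolve_right h00⟩
      rw [RU_eig1 h1 hP, one_mul] at f1
      exact ⟨f1, a1, a2⟩
    · rintro ⟨h1, h2, h3, h4, h5⟩
      exact ⟨h1, h2, h3, h4, h5.2⟩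

end
end GL3Q

namespace GL3Q
set_option linter.unusedSectionVars false
set_option linter.unusedVariables false
set_option linter.unusedSimpArgs false
open Matrix

section
variable {F : Type*} [Field F] [Fintype F]

theorem Good.inj {r : Fin 3 → F} (hr : Good r) : Function.Injective r := by
  have h1 := hr.h01
  have h2 := hr.h02
  have h3 := hr.h12
  intro i j h
  fin_cases i <;> fin_cases j <;> simp_all

theorem eig_cnt {r : Fin 3 → F} (hr : Good r) {A : M F} (hA : CR r A) :
    cnt (fun v : Fin 3 → F => v ≠ 0 ∧ A *ᵥ v = r 0 • v) = Q F - 1 := by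
  obtain ⟨u, hu⟩ := (isConj_diag_iff hr.inj A).2 hA
  have hu' : u.1 * Matrix.diagonal r = A * u.1 := hu
  have hiu : (u⁻¹).1 * u.1 = 1 := Units.inv_mul u
  have hui : u.1 * (u⁻¹).1 = 1 := Units.mul_inv u
  generalize u.1 = x at *
  generalize (u⁻¹).1 = y at *
  have key : ∀ v : Fin 3 → F, A *ᵥ v = r 0 • v → y *ᵥ v = ![(y *ᵥ v) 0, 0, 0] := by
    intro v hv
    have e : Matrix.diagonal r *ᵥ (y *ᵥ v) = r 0 • (y *ᵥ v) := by
      rw [← Matrix.mulVec_smul, ← hv, Matrix.mulVec_mulVec, Matrix.mulVec_mulVec]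
      congr 1
      calc diagonal r * y = (y * x) * diagonal r * y := by rw [hiu, one_mul]
        _ = y * (x * diagonal r) * y := by simp only [mul_assoc]
        _ = y * A * (x * y) := by rw [hu']; simp only [mul_assoc]
        _ = y * A := by rw [hui, mul_one]
    have e1 := congrFun e 1
    have e2 := congrFun e 2
    simp only [Matrix.mulVec_diagonal, Pi.smul_apply, smul_eq_mul] at e1 e2
    have f1 : (y *ᵥ v) 1 = 0 := by
      have : (r 1 - r 0) * (y *ᵥ v) 1 = 0 := by linear_combination e1
      exact (mul_eq_zero.1 this).resolve_left (sub_ne_zero.2 hr.h01.symm)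
    have f2 : (y *ᵥ v) 2 = 0 := by
      have : (r 2 - r 0) * (y *ᵥ v) 2 = 0 := by linear_combination e2
      exact (mul_eq_zero.1 this).resolve_left (sub_ne_zero.2 hr.h02.symm)
    ext i
    fin_cases i
    · simp
    · simpa using f1
    · simpa using f2
  have hxy : ∀ v, x *ᵥ (y *ᵥ v) = v := fun v => by rw [Matrix.mulVec_mulVec, hui, Matrix.one_mulVec]
  have hyx : ∀ v, y *ᵥ (x *ᵥ v) = v := fun v => by rw [Matrix.mulVec_mulVec, hiu, Matrix.one_mulVec]
  rw [show Q F - 1 = cnt (fun t : F => t ≠ 0) from (cnt_ne (0 : F)).symm]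
  refine cnt_bij (fun v => (y *ᵥ v) 0) (fun t => x *ᵥ ![t, 0, 0]) ?_ ?_ ?_ ?_
  · rintro v ⟨h0, h⟩ h1
    apply h0
    have := key v h
    rw [h1] at this
    rw [← hxy v, this]
    rw [show (![0, 0, 0] : Fin 3 → F) = 0 by ext i; fin_cases i <;> rfl, Matrix.mulVec_zero]
  · intro t ht
    constructor
    · intro h
      have := hyx ![t, 0, 0]
      rw [h, Matrix.mulVec_zero] at this
      exact ht (congrFun this 0).symm
    · rw [Matrix.mulVec_mulVec, ← hu', ← Matrix.mulVec_mulVec, ← Matrix.mulVec_smul]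
      congr 1
      ext i
      rw [Matrix.mulVec_diagonal]
      fin_cases i <;> simp
  · rintro v ⟨h0, h⟩
    rw [← key v h, hxy]
  · intro t ht
    rw [hyx]; rfl

theorem nf1 {v : Fin 3 → F} (hv : v ≠ 0) : ∃ x y : M F, y * x = 1 ∧ x * y = 1 ∧
    x *ᵥ Pi.single 0 1 = v := by
  have key : ∃ x : M F, x.det ≠ 0 ∧ ∀ i, x i 0 = v i := by
    by_cases h0 : v 0 = 0
    · by_cases h1 : v 1 = 0
      · refine ⟨!![0, 1, 0; 0, 0, 1; v 2, 0, 0], ?_, ?_⟩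
        · rw [Matrix.det_fin_three]
          have : v 2 ≠ 0 := by
            intro h2; apply hv; ext i; fin_cases i <;> simpa
          simpa using this
        · intro i; fin_cases i <;> simp [h0, h1]
      · refine ⟨!![0, 1, 0; v 1, 0, 0; v 2, 0, 1], ?_, ?_⟩
        · rw [Matrix.det_fin_three]; simpa using h1
        · intro i; fin_cases i <;> simp [h0]
    · refine ⟨!![v 0, 0, 0; v 1, 1, 0; v 2, 0, 1], ?_, ?_⟩
      · rw [Matrix.det_fin_three]; simpa using h0
      · intro i; fin_cases i <;> simp
  obtain ⟨x, hd, hx⟩ := key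
  obtain ⟨y, h1, h2⟩ := exists_inv hd
  exact ⟨x, y, h1, h2, by ext i; simp [hx]⟩

theorem Ev_vec (l : F) (S : M F) : Ev l S ↔ S *ᵥ Pi.single 0 1 = l • Pi.single 0 1 := by
  rw [Ev_col, col_iff]
  simp only
  have : (l • Pi.single 0 1 : Fin 3 → F) = ![l, 0, 0] := by
    ext i; fin_cases i <;> simp
  rw [this]

theorem N_eq {b c r : Fin 3 → F} (hr : Good r) :
    (Q F - 1) * cnt (fun p : (M F × M F) × M F => RU p.2 ∧ CR b p.1.1 ∧ CR c p.1.2 ∧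
      CR r (p.2 * (p.1.1 * p.1.2))) = (Q F ^ 3 - 1) * tri b c r (fun _ => True) := by
  have e1 := cnt_fib (fun z : ((M F × M F) × M F) × (Fin 3 → F) => RU z.1.2 ∧ CR b z.1.1.1 ∧
    CR c z.1.1.2 ∧ CR r (z.1.2 * (z.1.1.1 * z.1.1.2)) ∧ z.2 ≠ 0 ∧
    (z.1.2 * (z.1.1.1 * z.1.1.2)) *ᵥ z.2 = r 0 • z.2)
    (fun p : (M F × M F) × M F => RU p.2 ∧ CR b p.1.1 ∧ CR c p.1.2 ∧
      CR r (p.2 * (p.1.1 * p.1.2))) (Q F - 1) (fun x y h => ⟨h.1, h.2.1, h.2.2.1, h.2.2.2.1⟩)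
    (fun x hx => by
      rw [← eig_cnt hr hx.2.2.2]
      exact cnt_congr fun v => by tauto)
  have e2 := cnt_fib2 (fun z : ((M F × M F) × M F) × (Fin 3 → F) => RU z.1.2 ∧ CR b z.1.1.1 ∧
    CR c z.1.1.2 ∧ CR r (z.1.2 * (z.1.1.1 * z.1.1.2)) ∧ z.2 ≠ 0 ∧
    (z.1.2 * (z.1.1.1 * z.1.1.2)) *ᵥ z.2 = r 0 • z.2)
    (fun v => v ≠ 0) (tri b c r (fun _ => True)) (fun x y h => h.2.2.2.2.1)
    (fun v hv => by
      obtain ⟨x, y, hyx, hxy, hx⟩ := nf1 hv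
      unfold tri
      rw [← three_conj hyx hxy b c (X := fun R S T => CR r (R * (S * T)) ∧ v ≠ 0 ∧
        (R * (S * T)) *ᵥ v = r 0 • v)
        (Y := fun R S T => (Ev (r 0) (R * (S * T)) ∧ CR r (R * (S * T))) ∧ True)]
      intro R S T
      rw [← conj_prod hxy, ← conj_prod hxy, CR_conj hxy, Ev_vec, conj_vec hyx hxy, hx,
        Matrix.mulVec_smul, hx]
      tauto)
  rw [← e1, e2, cnt_ne, mul_comm]
  congr 2
  simp [Q]

end
end GL3Q

namespace GL3Q
set_option linter.unusedSectionVars false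
set_option linter.unusedVariables false
set_option linter.unusedSimpArgs false
open Matrix

section
variable {F : Type*} [Field F] [Fintype F]

theorem S_val {b c r : Fin 3 → F} (hb : Good b) (hc : Good c) (hr : Good r)
    (hp : (b 0 * b 1 * b 2) * (c 0 * c 1 * c 2) = r 0 * r 1 * r 2)
    (hg : ∀ k i j, b i * c j ≠ r k) :
    tri b c r (fun _ => True) = (Q F ^ 3 - Q F) * (Q F ^ 3 - Q F ^ 2) *
      (Q F ^ 4 * (Q F ^ 4 + 6 * Q F ^ 3 + 19 * Q F ^ 2 + 42 * Q F + 46)) := by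
  rw [S_eq hb hc hr hp, K_eq hb hc hr hp hg, E_eq hb hc hr hp hg, Y_eq hb hc hr hp hg]
  have h1 := H_eq hb hc
  have h2 := Hs_tot hb hc
  generalize cnt (fun p : M F × M F => CR b p.1 ∧ CR c p.2 ∧ E12 (p.1 * p.2)) = H at *
  generalize cnt (fun p : M F × M F => CR b p.1 ∧ CR c p.2 ∧
    (E12 (p.1 * p.2) ∧ (p.1 * p.2) 2 1 = 0)) = Hs at *
  generalize Q F = q at *
  unfold X1 at *
  linear_combination (q ^ 2 + q) * h1 + ((q ^ 3 - q) - (q ^ 2 + q) * (q + 1)) * h2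

theorem Q_ge : 2 ≤ Q F := by
  have : 1 < Fintype.card F := Fintype.one_lt_card
  unfold Q; omega

theorem N_val {b c r : Fin 3 → F} (hb : Good b) (hc : Good c) (hr : Good r)
    (hp : (b 0 * b 1 * b 2) * (c 0 * c 1 * c 2) = r 0 * r 1 * r 2)
    (hg : ∀ k i j, b i * c j ≠ r k) :
    cnt (fun p : (M F × M F) × M F => RU p.2 ∧ CR b p.1.1 ∧ CR c p.1.2 ∧
      CR r (p.2 * (p.1.1 * p.1.2))) = (Q F ^ 2 + Q F + 1) * ((Q F ^ 3 - Q F) * (Q F ^ 3 - Q F ^ 2)) *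
      (Q F ^ 4 * (Q F ^ 4 + 6 * Q F ^ 3 + 19 * Q F ^ 2 + 42 * Q F + 46)) := by
  have h := N_eq (b := b) (c := c) hr
  rw [S_val hb hc hr hp hg] at h
  have h2 : Q F - 1 ≠ 0 := by have := Q_ge (F := F); omega
  apply mul_left_cancel₀ h2
  rw [h]; ring

theorem card_GL : (Nat.card (Matrix (Fin 3) (Fin 3) F)ˣ : ℤ) / (Q F - 1) =
    (Q F ^ 2 + Q F + 1) * ((Q F ^ 3 - Q F) * (Q F ^ 3 - Q F ^ 2)) := by
  have h := Matrix.card_GL_field (𝔽 := F) 3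
  have h' : (Nat.card (Matrix (Fin 3) (Fin 3) F)ˣ : ℤ) =
      (Q F ^ 3 - 1) * (Q F ^ 3 - Q F) * (Q F ^ 3 - Q F ^ 2) := by
    change Nat.card (Matrix (Fin 3) (Fin 3) F)ˣ = _ at h
    rw [h, Fin.prod_univ_three]
    have h1 : 1 ≤ Fintype.card F := Fintype.card_pos
    have g0 : 1 ≤ Fintype.card F ^ 3 := Nat.one_le_pow _ _ h1
    have g1 : Fintype.card F ≤ Fintype.card F ^ 3 := Nat.le_self_pow (by norm_num) _
    have g2 : Fintype.card F ^ 2 ≤ Fintype.card F ^ 3 := Nat.pow_le_pow_right h1 (by norm_num)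
    simp only [Fin.val_zero, Fin.val_one, Fin.val_two, pow_zero, pow_one, Q]
    push_cast [Nat.cast_sub g0, Nat.cast_sub g1, Nat.cast_sub g2]
    ring
  have h2 : Q F - 1 ≠ 0 := by have := Q_ge (F := F); omega
  rw [h']
  apply Int.ediv_eq_of_eq_mul_left h2
  ring

theorem good_of {r : Fin 3 → F} (h : Function.Injective r) (h0 : ∀ i, r i ≠ 0) : Good r :=
  ⟨fun e => absurd (h e) (by decide), fun e => absurd (h e) (by decide),
    fun e => absurd (h e) (by decide), h0 0, h0 1, h0 2⟩

theorem CR_inv_mp {r : Fin 3 → F} (hi : Function.Injective r) (h0 : ∀ i, r i ≠ 0) {S h : M F}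
    (hS : S * h = 1) (hc : CR r S) : CR (fun i => (r i)⁻¹) h := by
  have hi' : Function.Injective (fun i => (r i)⁻¹) := fun i j e => hi (inv_injective e)
  rw [← isConj_diag_iff hi] at hc
  rw [← isConj_diag_iff hi']
  obtain ⟨u, hu⟩ := hc
  have hu' : u.1 * Matrix.diagonal r = S * u.1 := hu
  refine ⟨u, ?_⟩
  show u.1 * Matrix.diagonal (fun i => (r i)⁻¹) = h * u.1
  have hS' : h * S = 1 := mul_eq_one_comm.1 hS
  have hd : Matrix.diagonal r * Matrix.diagonal (fun i => (r i)⁻¹) = 1 := by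
    rw [Matrix.diagonal_mul_diagonal, ← Matrix.diagonal_one]
    congr 1; funext i; exact mul_inv_cancel₀ (h0 i)
  calc u.1 * Matrix.diagonal (fun i => (r i)⁻¹)
      = h * (S * u.1) * Matrix.diagonal (fun i => (r i)⁻¹) := by
        rw [← mul_assoc h, hS', one_mul]
    _ = h * u.1 * (Matrix.diagonal r * Matrix.diagonal (fun i => (r i)⁻¹)) := by
        rw [← hu']; simp only [mul_assoc]
    _ = h * u.1 := by rw [hd, mul_one]

theorem CR_inv {r : Fin 3 → F} (hi : Function.Injective r) (h0 : ∀ i, r i ≠ 0) {S h : M F}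
    (hS : S * h = 1) : CR r S ↔ CR (fun i => (r i)⁻¹) h := by
  refine ⟨CR_inv_mp hi h0 hS, fun hc => ?_⟩
  have := CR_inv_mp (fun i j e => hi (inv_injective e)) (fun i => inv_ne_zero (h0 i))
    (mul_eq_one_comm.1 hS) hc
  simpa using this

theorem det_RU {T : M F} (h : RU T) : T.det ≠ 0 := by rw [h.1.2.2]; exact one_ne_zero

theorem reduce {a b c : Fin 3 → F} (hai : Function.Injective a) (ha0 : ∀ i, a i ≠ 0)
    (hbi : Function.Injective b) (hci : Function.Injective c) (hb : Good b) (hc : Good c) :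
    cnt (fun x : M F × M F × M F × M F => IsConj (Matrix.diagonal a) x.1 ∧
      IsConj (Matrix.diagonal b) x.2.1 ∧ IsConj (Matrix.diagonal c) x.2.2.1 ∧
      IsConj (!![1, 1, 0; 0, 1, 1; 0, 0, 1] : M F) x.2.2.2 ∧
      x.1 * x.2.1 * x.2.2.1 * x.2.2.2 = 1) =
    cnt (fun p : (M F × M F) × M F => RU p.2 ∧ CR b p.1.1 ∧ CR c p.1.2 ∧
      CR (fun i => (a i)⁻¹) (p.2 * (p.1.1 * p.1.2))) := by
  have hJ : ∀ T : M F, IsConj (!![1, 1, 0; 0, 1, 1; 0, 0, 1] : M F) T ↔ RU T := isConj_J3_iff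
  simp only [isConj_diag_iff hai, isConj_diag_iff hbi, isConj_diag_iff hci, hJ]
  refine cnt_bij (fun x => ((x.2.1, x.2.2.1), x.2.2.2))
    (fun p => ((p.1.1 * p.1.2 * p.2)⁻¹, p.1.1, p.1.2, p.2)) ?_ ?_ ?_ ?_
  · rintro ⟨A, B, C, D⟩ ⟨h1, h2, h3, h4, h5⟩
    refine ⟨h4, h2, h3, ?_⟩
    simp only at *
    rw [CR_comm, ← CR_inv hai ha0 (S := A) (by simpa only [mul_assoc] using h5)]
    exact h1
  · rintro ⟨⟨B, C⟩, D⟩ ⟨h4, h2, h3, h1⟩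
    simp only at *
    have hd : IsUnit (B * C * D).det := by
      rw [Matrix.det_mul, Matrix.det_mul]
      exact isUnit_iff_ne_zero.2 (mul_ne_zero (mul_ne_zero (det_ne hb h2) (det_ne hc h3)) (det_RU h4))
    have e := Matrix.nonsing_inv_mul _ hd
    refine ⟨?_, h2, h3, h4, by simpa only [mul_assoc] using e⟩
    rw [CR_inv hai ha0 e, CR_comm]
    exact h1
  · rintro ⟨A, B, C, D⟩ ⟨h1, h2, h3, h4, h5⟩
    simp only at *
    have : (B * C * D)⁻¹ = A := Matrix.inv_eq_left_inv (by simpa only [mul_assoc] using h5)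
    rw [this]
  · rintro ⟨⟨B, C⟩, D⟩ _
    rfl

theorem vec_ne {x y z : F} (h0 : x ≠ 0) (h1 : y ≠ 0) (h2 : z ≠ 0) (i : Fin 3) : ![x, y, z] i ≠ 0 := by
  fin_cases i <;> simpa

end
end GL3Q


/-- Genus 0, four punctures, `GL₃`, three generic regular semisimple classes and one regular
unipotent class: the number of quadruples `(S₁,S₂,S₃,S₄) ∈ C₁ × C₂ × C₃ × C₄` with
`S₁S₂S₃S₄ = 1` is `(|GL₃(F)|/(q−1))·q⁴(q⁴+6q³+19q²+42q+46)`. -/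
theorem GL3_quadruple_count_three_ss_one_unipotent
    {F : Type*} [Field F] [Fintype F] (hchar2 : ringChar F ≠ 2) (hchar3 : ringChar F ≠ 3)
    (q : ℕ) (hq : q = Fintype.card F)
    (a₁ a₂ a₃ b₁ b₂ b₃ c₁ c₂ c₃ : F)
    (ha0 : a₁ ≠ 0) (ha0' : a₂ ≠ 0) (ha0'' : a₃ ≠ 0)
    (hb0 : b₁ ≠ 0) (hb0' : b₂ ≠ 0) (hb0'' : b₃ ≠ 0)
    (hc0 : c₁ ≠ 0) (hc0' : c₂ ≠ 0) (hc0'' : c₃ ≠ 0)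
    (ha : Function.Injective ![a₁, a₂, a₃]) (hb : Function.Injective ![b₁, b₂, b₃])
    (hc : Function.Injective ![c₁, c₂, c₃])
    (hprod : (a₁ * a₂ * a₃) * (b₁ * b₂ * b₃) * (c₁ * c₂ * c₃) = 1)
    (hgen : ∀ i j l : Fin 3, ![a₁, a₂, a₃] i * ![b₁, b₂, b₃] j * ![c₁, c₂, c₃] l ≠ 1) :
    (Nat.card {x : Matrix (Fin 3) (Fin 3) F × Matrix (Fin 3) (Fin 3) F ×
        Matrix (Fin 3) (Fin 3) F × Matrix (Fin 3) (Fin 3) F //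
        IsConj (Matrix.diagonal ![a₁, a₂, a₃]) x.1 ∧
        IsConj (Matrix.diagonal ![b₁, b₂, b₃]) x.2.1 ∧
        IsConj (Matrix.diagonal ![c₁, c₂, c₃]) x.2.2.1 ∧
        IsConj (!![1, 1, 0; 0, 1, 1; 0, 0, 1] : Matrix (Fin 3) (Fin 3) F) x.2.2.2 ∧
        x.1 * x.2.1 * x.2.2.1 * x.2.2.2 = 1} : ℤ) =
      ((Nat.card (Matrix (Fin 3) (Fin 3) F)ˣ : ℤ) / ((q : ℤ) - 1)) *
        ((q : ℤ) ^ 4 * ((q : ℤ) ^ 4 + 6 * (q : ℤ) ^ 3 + 19 * (q : ℤ) ^ 2 +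
          42 * (q : ℤ) + 46)) := by
  have ha' := GL3Q.vec_ne ha0 ha0' ha0''
  have hGb := GL3Q.good_of hb (GL3Q.vec_ne hb0 hb0' hb0'')
  have hGc := GL3Q.good_of hc (GL3Q.vec_ne hc0 hc0' hc0'')
  have hGr : GL3Q.Good (fun i => (![a₁, a₂, a₃] i)⁻¹) :=
    GL3Q.good_of (fun i j e => ha (inv_injective e)) (fun i => inv_ne_zero (ha' i))
  have hqQ : (q : ℤ) = GL3Q.Q F := by rw [hq]; rfl
  rw [hqQ, GL3Q.card_GL, ← GL3Q.cnt_eq_natcard, GL3Q.reduce ha ha' hb hc hGb hGc]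
  refine GL3Q.N_val hGb hGc hGr ?_ ?_
  · show b₁ * b₂ * b₃ * (c₁ * c₂ * c₃) = a₁⁻¹ * a₂⁻¹ * a₃⁻¹
    field_simp
    linear_combination hprod
  · intro k i j h
    apply hgen k i j
    rw [mul_assoc, h]
    exact mul_inv_cancel₀ (ha' k)
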